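/- arXiv:1802.02225 — 6 statements merged into one kernel-verified Lean document; each statement's English description precedes it below -/
import Mathlib

section
/- Let (W,S) be a Coxeter system and let t_0, t_1, …, t_r be pairwise distinct elements of S such that t_i t_{i-1} ≠ t_{i-1} t_i for all i = 1, …, r. Let w ∈ W be such that t_0 t_1 ⋯ t_r ≤ w in the Bruhat order. Then every reduced word for w has (t_0, t_1, …, t_r) as a subsequence. -/
open Module Polynomial.Chebyshev in
theorem chainAux_pow_eq_one {V : Type*} [AddCommGroup V] [Module ℝ V] {x y : V} {f g : Dual ℝ V}
    (hf : f x = 2) (hg : g y = 2) (m : ℕ) (hm : 2 ≤ m)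
    (hfy : f y = -2 * Real.cos (Real.pi / m)) (hgx : g x = -2 * Real.cos (Real.pi / m)) :
    (reflection hf * reflection hg) ^ m = 1 := by
  ext z
  rw [reflection_mul_reflection_pow_apply hf hg m z _ rfl]
  rcases hm.eq_or_lt with rfl | hm3
  · have h0 : Real.cos (Real.pi / (2 : ℕ)) = 0 := by simp
    rw [h0] at hfy hgx
    simp only [mul_zero] at hfy hgx
    simp [hfy, hgx]
    module
  · set φ : ℝ := 2 * (Real.pi / m) with hφ
    have hm0 : (m : ℝ) ≠ 0 := by positivity
    have hm3' : (3 : ℝ) ≤ m := by exact_mod_cast hm3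
    have hs : Real.sin φ ≠ 0 := by
      apply ne_of_gt
      apply Real.sin_pos_of_pos_of_lt_pi
      · positivity
      · rw [hφ, ← mul_div_assoc, div_lt_iff₀ (by positivity)]
        nlinarith [Real.pi_pos]
    have ht : f y * g x - 2 = 2 * Real.cos φ := by
      rw [hfy, hgx, hφ, Real.cos_two_mul]; ring
    rw [ht]
    have hS (n : ℤ) : (S ℝ n).eval (2 * Real.cos φ) = Real.sin ((n + 1) * φ) / Real.sin φ := by
      rw [eq_div_iff hs]; exact S_two_mul_real_cos φ n
    obtain ⟨k, hk | hk⟩ := Nat.even_or_odd' m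
    · have e1 : ((m : ℤ) - 2) / 2 = k - 1 := by omega
      have e2 : ((m : ℤ) - 1) / 2 = k - 1 := by omega
      have h0 : (S ℝ ((k : ℤ) - 1)).eval (2 * Real.cos φ) = 0 := by
        rw [hS]
        have : (((k : ℤ) - 1 : ℤ) + 1 : ℝ) * φ = Real.pi := by
          push_cast
          rw [hφ, hk]
          rw [hk] at hm0
          push_cast at hm0 ⊢
          have hk0 : (k : ℝ) ≠ 0 := right_ne_zero_of_mul hm0
          field_simp
          ring
        rw [this]; simp
      rw [e1, e2, h0]; simp
    · have e1 : ((m : ℤ) - 1) / 2 = k := by omega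
      have e2 : ((m : ℤ) - 3) / 2 = k - 1 := by omega
      have e3 : (m : ℤ) / 2 = k := by omega
      have e4 : ((m : ℤ) - 2) / 2 = k - 1 := by omega
      have h0 : (S ℝ (k : ℤ)).eval (2 * Real.cos φ) + (S ℝ ((k : ℤ) - 1)).eval (2 * Real.cos φ)
          = 0 := by
        rw [hS, hS, ← add_div]
        have : (((k : ℤ) - 1 : ℤ) + 1 : ℝ) * φ = 2 * Real.pi - (((k : ℤ) : ℝ) + 1) * φ := by
          push_cast
          rw [hφ, hk]
          rw [hk] at hm0
          push_cast at hm0 ⊢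
          field_simp
          ring
        rw [this, Real.sin_two_pi_sub]; simp
      rw [e1, e2, e3, e4, h0]; simp

/-- The (doubled) Coxeter form. -/
noncomputable def chainAuxK {B : Type*} (M : CoxeterMatrix B) (i j : B) : ℝ :=
  open Classical in
  if i = j then 2 else if M i j = 0 then -2 else -2 * Real.cos (Real.pi / M i j)

theorem chainAuxK_self {B : Type*} (M : CoxeterMatrix B) (i : B) : chainAuxK M i i = 2 := by
  simp [chainAuxK]

theorem chainAuxK_symm {B : Type*} (M : CoxeterMatrix B) (i j : B) :
    chainAuxK M i j = chainAuxK M j i := by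
  by_cases h : i = j
  · rw [h]
  · simp only [chainAuxK, M.symmetric i j, if_neg h, if_neg (Ne.symm h)]

theorem chainAux_two_le {B : Type*} (M : CoxeterMatrix B) {i j : B} (h : i ≠ j)
    (h0 : M i j ≠ 0) : 2 ≤ M i j := by
  have := M.off_diagonal i j h
  omega

theorem chainAuxK_nonpos {B : Type*} (M : CoxeterMatrix B) {i j : B} (h : i ≠ j) :
    chainAuxK M i j ≤ 0 := by
  rw [chainAuxK, if_neg h]
  split_ifs with h0
  · norm_num
  · have h2 : (2 : ℝ) ≤ M i j := by exact_mod_cast chainAux_two_le M h h0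
    have : 0 ≤ Real.cos (Real.pi / M i j) := by
      apply Real.cos_nonneg_of_neg_pi_div_two_le_of_le
      · have : 0 ≤ Real.pi / M i j := by positivity
        linarith [Real.pi_pos]
      · exact div_le_div_of_nonneg_left Real.pi_pos.le (by norm_num) h2
    linarith

theorem chainAuxK_neg {B : Type*} (M : CoxeterMatrix B) {i j : B} (h : i ≠ j) (h2 : M i j ≠ 2) :
    chainAuxK M i j < 0 := by
  rw [chainAuxK, if_neg h]
  split_ifs with h0
  · norm_num
  · have h3 : (2 : ℝ) < M i j := by
      exact_mod_cast lt_of_le_of_ne (chainAux_two_le M h h0) (Ne.symm h2)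
    have : 0 < Real.cos (Real.pi / M i j) := by
      apply Real.cos_pos_of_mem_Ioo
      constructor
      · have : 0 ≤ Real.pi / M i j := by positivity
        linarith [Real.pi_pos]
      · exact div_lt_div_of_pos_left Real.pi_pos (by norm_num) h3
    linarith

/-- The functional. -/
noncomputable def chainAuxF {B : Type*} (M : CoxeterMatrix B) (i : B) :
    Module.Dual ℝ (B →₀ ℝ) :=
  Finsupp.linearCombination ℝ (chainAuxK M i)

theorem chainAuxF_single {B : Type*} (M : CoxeterMatrix B) (i j : B) (c : ℝ) :
    chainAuxF M i (Finsupp.single j c) = c * chainAuxK M i j := by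
  simp [chainAuxF]

theorem chainAuxF_self {B : Type*} (M : CoxeterMatrix B) (i : B) :
    chainAuxF M i (Finsupp.single i 1) = 2 := by
  rw [chainAuxF_single, chainAuxK_self, one_mul]

/-- The geometric reflection. -/
noncomputable def chainAuxR {B : Type*} (M : CoxeterMatrix B) (i : B) :
    (B →₀ ℝ) ≃ₗ[ℝ] (B →₀ ℝ) :=
  Module.reflection (chainAuxF_self M i)

theorem chainAux_liftable {B : Type*} (M : CoxeterMatrix B) : M.IsLiftable (chainAuxR M) := by
  intro i j
  by_cases h : i = j
  · subst h
    rw [M.diagonal, pow_one]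
    ext1 z
    exact Module.involutive_reflection (chainAuxF_self M i) z
  by_cases h0 : M i j = 0
  · rw [h0, pow_zero]
  · apply chainAux_pow_eq_one _ _ _ (chainAux_two_le M h h0)
    · rw [chainAuxF_single, chainAuxK, if_neg h, if_neg h0, one_mul]
    · rw [chainAuxF_single, chainAuxK_symm, chainAuxK, if_neg h, if_neg h0, one_mul]

theorem chainAuxR_apply_self {B : Type*} (M : CoxeterMatrix B) (i : B) (v : B →₀ ℝ) :
    chainAuxR M i v i = v i - chainAuxF M i v := by
  simp [chainAuxR, Module.reflection_apply]

theorem chainAuxR_apply_ne {B : Type*} (M : CoxeterMatrix B) {i j : B} (h : j ≠ i)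
    (v : B →₀ ℝ) : chainAuxR M i v j = v j := by
  simp [chainAuxR, Module.reflection_apply, Finsupp.single_apply, h.symm]

/-- The geometric representation evaluated on a word. -/
noncomputable def chainAuxP {B : Type*} (M : CoxeterMatrix B) (ω : List B) :
    (B →₀ ℝ) ≃ₗ[ℝ] (B →₀ ℝ) :=
  (ω.map (chainAuxR M)).prod

theorem chainAuxP_congr {B : Type*} {W : Type*} [Group W] {M : CoxeterMatrix B}
    (cs : CoxeterSystem M W) {ω ω' : List B} (h : cs.wordProd ω = cs.wordProd ω') :
    chainAuxP M ω = chainAuxP M ω' := by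
  have key (ω : List B) :
      cs.lift ⟨chainAuxR M, chainAux_liftable M⟩ (cs.wordProd ω) = chainAuxP M ω := by
    rw [CoxeterSystem.wordProd, map_list_prod, List.map_map, chainAuxP]
    congr 2
    funext i
    exact cs.lift_apply_simple (chainAux_liftable M) i
  rw [← key, ← key, h]

theorem chainAuxP_cons {B : Type*} (M : CoxeterMatrix B) (a : B) (ω : List B) (v : B →₀ ℝ) :
    chainAuxP M (a :: ω) v = chainAuxR M a (chainAuxP M ω v) := by
  simp [chainAuxP]

theorem chainAuxP_append {B : Type*} (M : CoxeterMatrix B) (ω ω' : List B) (v : B →₀ ℝ) :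
    chainAuxP M (ω ++ ω') v = chainAuxP M ω (chainAuxP M ω' v) := by
  simp [chainAuxP]

theorem chainAuxP_apply_notMem {B : Type*} (M : CoxeterMatrix B) (j : B) (ω : List B)
    (h : j ∉ ω) (v : B →₀ ℝ) : chainAuxP M ω v j = v j := by
  induction ω with
  | nil => simp [chainAuxP]
  | cons a ω ih =>
    simp only [List.mem_cons, not_or] at h
    rw [chainAuxP_cons, chainAuxR_apply_ne M h.1, ih h.2]

theorem chainAuxF_nonpos {B : Type*} (M : CoxeterMatrix B) (a : B) (v : B →₀ ℝ)
    (hv : ∀ b, 0 ≤ v b) (ha : v a = 0) : chainAuxF M a v ≤ 0 := by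
  rw [chainAuxF, Finsupp.linearCombination_apply, Finsupp.sum]
  apply Finset.sum_nonpos
  intro b _
  by_cases h : a = b
  · subst h; simp [ha]
  · exact mul_nonpos_of_nonneg_of_nonpos (hv b) (chainAuxK_nonpos M h)

theorem chainAuxF_le {B : Type*} (M : CoxeterMatrix B) (a b : B) (hab : a ≠ b) (v : B →₀ ℝ)
    (hv : ∀ b, 0 ≤ v b) : chainAuxF M a v ≤ 2 * v a + v b * chainAuxK M a b := by
  classical
  have h1 : v = Finsupp.single a (v a) + (Finsupp.single b (v b) + (v.erase a).erase b) := by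
    ext c
    by_cases hc : c = a
    · subst hc; simp [hab, hab.symm]
    · by_cases hc' : c = b
      · subst hc'; simp [hab]
      · simp [hc, hc', Finsupp.single_apply, Ne.symm hc, Ne.symm hc', Finsupp.erase_ne]
  have h2 : chainAuxF M a ((v.erase a).erase b) ≤ 0 := by
    apply chainAuxF_nonpos
    · intro c
      simp only [Finsupp.erase_apply]
      split_ifs <;> simp [hv]
    · simp [hab]
  have h3 := congrArg (chainAuxF M a) h1
  rw [map_add, map_add, chainAuxF_single, chainAuxF_single, chainAuxK_self] at h3
  linarith

theorem chainAuxP_nonneg {B : Type*} (M : CoxeterMatrix B) (j : B) (L : List B)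
    (hL : (j :: L).Nodup) (b : B) : 0 ≤ chainAuxP M L (Finsupp.single j 1) b := by
  classical
  induction L generalizing b with
  | nil =>
    simp only [chainAuxP, List.map_nil, List.prod_nil, LinearEquiv.coe_one, id_eq,
      Finsupp.single_apply]
    split_ifs <;> norm_num
  | cons a L ih =>
    simp only [List.nodup_cons, List.mem_cons, not_or] at hL ih
    obtain ⟨⟨hja, hjL⟩, haL, hL⟩ := hL
    rw [chainAuxP_cons]
    by_cases hb : b = a
    · subst hb
      have h0 : chainAuxP M L (Finsupp.single j 1) b = 0 := by
        rw [chainAuxP_apply_notMem M b L haL]; simp [hja, Ne.symm hja]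
      rw [chainAuxR_apply_self, h0]
      linarith [chainAuxF_nonpos M b _ (ih ⟨hjL, hL⟩) h0]
    · rw [chainAuxR_apply_ne M hb]
      exact ih ⟨hjL, hL⟩ b

theorem chainAux_mem {B : Type*} (M : CoxeterMatrix B) {L ω : List B} (hL : L.Nodup)
    (h : chainAuxP M ω = chainAuxP M L) {j : B} (hj : j ∈ L) : j ∈ ω := by
  by_contra hjω
  obtain ⟨L1, L2, rfl⟩ := List.append_of_mem hj
  have hd := List.nodup_middle.1 hL
  simp only [List.nodup_cons, List.mem_append, not_or] at hd
  set v := (chainAuxP M L2).symm (Finsupp.single j 1) with hv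
  have hv2 : chainAuxP M L2 v = Finsupp.single j 1 := by simp [hv]
  have hvj : v j = 1 := by
    rw [← chainAuxP_apply_notMem M j L2 hd.1.2 v, hv2]; simp
  have e1 : chainAuxP M ω v j = 1 := by rw [chainAuxP_apply_notMem M j ω hjω, hvj]
  rw [h, chainAuxP_append, chainAuxP_apply_notMem M j L1 hd.1.1, chainAuxP_cons, hv2,
    chainAuxR_apply_self, chainAuxF_self] at e1
  norm_num at e1

theorem chainAux_last {B : Type*} (M : CoxeterMatrix B) {L1 L2 ω : List B} {j a : B}
    (hL : (L1 ++ j :: a :: L2).Nodup) (hK : M j a ≠ 2) (hω : j ∉ ω) :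
    chainAuxP M (ω ++ [j]) ≠ chainAuxP M (L1 ++ j :: a :: L2) := by
  intro h
  have hd := List.nodup_middle.1 hL
  simp only [List.nodup_cons, List.mem_append, not_or] at hd
  obtain ⟨⟨hj1, hj2⟩, hd⟩ := hd
  have hn : (j :: a :: L2).Nodup := (List.nodup_append.1 hL).2.1
  have hn2 := hn
  simp only [List.nodup_cons, List.mem_cons, not_or] at hn2
  obtain ⟨⟨hja, hjL⟩, haL, hL2⟩ := hn2
  have e1 : chainAuxP M (ω ++ [j]) (Finsupp.single j 1) j = -1 := by
    rw [chainAuxP_append, chainAuxP_apply_notMem M j ω hω, chainAuxP_cons, chainAuxR_apply_self]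
    simp only [chainAuxP, List.map_nil, List.prod_nil, LinearEquiv.coe_one, id_eq]
    rw [chainAuxF_self]; norm_num
  rw [h, chainAuxP_append, chainAuxP_apply_notMem M j L1 hj1, chainAuxP_cons,
    chainAuxR_apply_self] at e1
  have hneg := chainAuxK_neg M hja hK
  set u := chainAuxP M L2 (Finsupp.single j 1) with hu
  have huj : u j = 1 := by rw [hu, chainAuxP_apply_notMem M j L2 hjL]; simp
  have hua : u a = 0 := by
    rw [hu, chainAuxP_apply_notMem M a L2 haL]; simp [hja, Ne.symm hja]
  have hu0 : ∀ b, 0 ≤ u b := chainAuxP_nonneg M j L2 (by simp [hjL, hL2])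
  have f1 := chainAuxF_le M a j (Ne.symm hja) u hu0
  rw [hua, huj, chainAuxK_symm] at f1
  set v := chainAuxP M (a :: L2) (Finsupp.single j 1) with hv
  have hva : v a = - chainAuxF M a u := by
    rw [hv, chainAuxP_cons, chainAuxR_apply_self, ← hu, hua, zero_sub]
  have hvj : v j = 1 := by
    rw [hv, chainAuxP_cons, chainAuxR_apply_ne M hja, ← hu, huj]
  have hv0 : ∀ b, 0 ≤ v b := chainAuxP_nonneg M j _ hn
  have f2 := chainAuxF_le M j a hja v hv0
  rw [hvj] at f2 e1
  have : 0 < v a := by linarith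
  nlinarith

theorem chainAux_unique {B : Type*} (M : CoxeterMatrix B) (L : List B) (hL : L.Nodup)
    (hc : L.IsChain (fun a b => M a b ≠ 2)) (ω : List B) (hlen : ω.length ≤ L.length)
    (h : chainAuxP M ω = chainAuxP M L) : ω = L := by
  induction L using List.reverseRecOn generalizing ω with
  | nil => exact List.length_eq_zero_iff.1 (by simpa using hlen)
  | append_singleton L a ih =>
    have hsub : (L ++ [a]).Subperm ω :=
      List.subperm_of_subset hL fun x hx => chainAux_mem M hL h hx
    have hperm : (L ++ [a]).Perm ω := hsub.perm_of_length_le hlen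
    have hωn : ω.Nodup := hperm.nodup_iff.1 hL
    rcases List.eq_nil_or_concat' ω with rfl | ⟨ω, j, rfl⟩
    · simp at hperm
    have hjω : j ∉ ω := by
      have := List.nodup_middle.1 hωn
      simp at this
      exact this.1
    have hja : j = a := by
      by_contra hja
      have hj : j ∈ L ++ [a] := hperm.mem_iff.2 (by simp)
      obtain ⟨L1, L2, hL12⟩ := List.append_of_mem hj
      cases L2 with
      | nil =>
        have := (List.append_inj' hL12 rfl).2
        simp at this
        exact hja this.symm
      | cons b L2 =>
        rw [hL12] at hL hc h
        refine chainAux_last M hL ?_ hjω h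
        have := (List.isChain_append.1 hc).2.1
        exact (List.isChain_cons_cons.1 this).1
    subst hja
    congr 1
    apply ih (List.nodup_append.1 hL).1 (List.isChain_append.1 hc).1
    · simpa using hlen
    · simp only [chainAuxP, List.map_append, List.prod_append] at h
      exact mul_right_cancel h


/-- The Bruhat order on a Coxeter group, characterized by the subword property:
`v ≤ w` if and only if every reduced word for `w` contains a reduced word for `v`
as a subsequence. -/
def CoxeterSystem.bruhatLE {B : Type*} {W : Type*} [Group W] {M : CoxeterMatrix B}
    (cs : CoxeterSystem M W) (v w : W) : Prop :=
  ∀ ω : List B, cs.IsReduced ω → cs.wordProd ω = w →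
    ∃ ω' : List B, ω'.Sublist ω ∧ cs.IsReduced ω' ∧ cs.wordProd ω' = v

/-- Let `t 0, …, t r` be pairwise distinct simple reflections such that
consecutive ones do not commute, and let `w` be an element with
`t 0 * t 1 * ⋯ * t r ≤ w` in the Bruhat order. Then every reduced word for `w` has
`(t 0, …, t r)` as a subsequence. -/
theorem every_reduced_word_has_chain_as_subsequence
    {B : Type*} {W : Type*} [Group W] {M : CoxeterMatrix B} (cs : CoxeterSystem M W)
    (r : ℕ) (t : Fin (r + 1) → B)
    (hdist : Function.Injective fun i => cs.simple (t i))
    (hnc : ∀ i : Fin r,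
      cs.simple (t i.succ) * cs.simple (t i.castSucc) ≠
        cs.simple (t i.castSucc) * cs.simple (t i.succ))
    (w : W) (hle : cs.bruhatLE (cs.wordProd (List.ofFn t)) w) :
    ∀ ω : List B, cs.IsReduced ω → cs.wordProd ω = w → (List.ofFn t).Sublist ω := by
  intro ω hω hw
  obtain ⟨ω', hsub, hred, hprod⟩ := hle ω hω hw
  have hinj : Function.Injective t := fun i j hij => hdist (congrArg cs.simple hij)
  have hlen : ω'.length ≤ (List.ofFn t).length := by
    rw [← hred.eq, hprod]
    exact cs.length_wordProd_le _
  have hchain : (List.ofFn t).IsChain (fun a b => M a b ≠ 2) := by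
    rw [List.isChain_ofFn]
    intro i hi h2
    have hcomm := cs.simple_mul_simple_pow (t ⟨i, by omega⟩) (t ⟨i + 1, hi⟩)
    rw [h2, pow_two] at hcomm
    apply hnc ⟨i, by omega⟩
    have := eq_inv_of_mul_eq_one_left hcomm
    rw [mul_inv_rev, cs.inv_simple, cs.inv_simple] at this
    exact this.symm
  rw [← chainAux_unique M _ (List.nodup_ofFn.2 hinj) hchain ω' hlen (chainAuxP_congr cs hprod)]
  exact hsub
end

section
/- Let (W,S) be a Coxeter system and let t_0, t_1, …, t_r be pairwise distinct elements of S such that t_i t_{i-1} ≠ t_{i-1} t_i for all i = 1, …, r. Let w ∈ W be such that t_0 t_1 ⋯ t_r ≤ w in the Bruhat order, and let s ∈ S with s ≠ t_0. Then t_0 t_1 ⋯ t_r ≤ s w in the Bruhat order. -/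
namespace CoxeterChain

open CoxeterSystem

variable {B : Type*} {W : Type*} [Group W] {M : CoxeterMatrix B} (cs : CoxeterSystem M W)

/-! ### The signed conjugation action and the exchange property -/

open Classical in
/-- The map `(x, e) ↦ (s x s, e + [x = s])`. -/
noncomputable def signedFun (i : B) : Function.End (W × ZMod 2) :=
  fun p => (cs.simple i * p.1 * cs.simple i, p.2 + if p.1 = cs.simple i then 1 else 0)

theorem end_mul_apply {α : Type*} (f g : Function.End α) (p : α) : (f * g) p = f (g p) := rfl

theorem end_one_apply {α : Type*} (p : α) : (1 : Function.End α) p = p := rfl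

open Classical in
theorem signedFun_pow (i j : B) (n : ℕ) (x : W) (e : ZMod 2) :
    ((signedFun cs i * signedFun cs j) ^ n : Function.End (W × ZMod 2)) (x, e) =
      ((cs.simple i * cs.simple j) ^ n * x * ((cs.simple i * cs.simple j) ^ n)⁻¹,
        e + ∑ k ∈ Finset.range (2 * n),
          if x = cs.simple j * (cs.simple i * cs.simple j) ^ k then 1 else 0) := by
  induction n with
  | zero => simp [end_one_apply]
  | succ n ih =>
    set g := cs.simple i * cs.simple j with hg
    have hginv : g⁻¹ = cs.simple j * cs.simple i := by simp [hg]
    have hjg : ∀ k : ℕ, cs.simple j * g ^ k = (g ^ k)⁻¹ * cs.simple j := by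
      intro k
      have h1 : cs.simple j * g * (cs.simple j)⁻¹ = g⁻¹ := by
        rw [hginv, hg]; simp [mul_assoc]
      have h2 : cs.simple j * g ^ k * (cs.simple j)⁻¹ = (g ^ k)⁻¹ := by
        rw [← conj_pow, h1, inv_pow]
      rw [← h2]; simp
    rw [pow_succ', end_mul_apply, ih]
    rw [end_mul_apply]
    have hA : (g ^ n * x * (g ^ n)⁻¹ = cs.simple j) ↔ (x = cs.simple j * g ^ (2 * n)) := by
      rw [two_mul, pow_add, ← mul_assoc, hjg n, mul_inv_eq_iff_eq_mul, mul_assoc,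
        ← eq_inv_mul_iff_mul_eq]
    have hB : (cs.simple j * (g ^ n * x * (g ^ n)⁻¹) * cs.simple j = cs.simple i) ↔
        (x = cs.simple j * g ^ (2 * n + 1)) := by
      have : cs.simple j * g ^ (2 * n + 1) = (g ^ n)⁻¹ * (cs.simple j * g) * g ^ n := by
        rw [show 2 * n + 1 = n + 1 + n by ring, pow_add, pow_succ, ← mul_assoc, ← mul_assoc, hjg n]
        group
      rw [this, ← mul_inv_eq_iff_eq_mul, ← inv_mul_eq_iff_eq_mul, inv_inv, ← mul_assoc (g ^ n)]
      generalize g ^ n * x * (g ^ n)⁻¹ = y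
      rw [hg]
      constructor
      · intro h; rw [← h]; simp [mul_assoc]
      · intro h; rw [h]; simp [mul_assoc]
    have h2 : 2 * (n + 1) = 2 * n + 1 + 1 := by ring
    rw [h2, Finset.sum_range_succ, Finset.sum_range_succ]
    simp only [signedFun, hA, hB]
    refine Prod.ext ?_ ?_
    · simp only [pow_succ' g n, mul_inv_rev, hginv]
      simp [hg, mul_assoc]
    · simp [add_assoc]

theorem signedFun_liftable : M.IsLiftable (signedFun cs) := by
  classical
  intro i j
  funext ⟨x, e⟩
  rw [signedFun_pow, two_mul, Finset.sum_range_add]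
  have h := cs.simple_mul_simple_pow i j
  simp only [pow_add, h, one_mul]
  rw [← two_mul, show (2 : ZMod 2) = 0 from rfl]
  simp [end_one_apply]

/-- The signed conjugation action. -/
noncomputable def signedHom : W →* Function.End (W × ZMod 2) :=
  cs.lift ⟨signedFun cs, signedFun_liftable cs⟩

theorem signedHom_simple (i : B) : signedHom cs (cs.simple i) = signedFun cs i :=
  cs.lift_apply_simple _ i

open Classical in
theorem signedHom_wordProd (ω : List B) (x : W) (e : ZMod 2) :
    signedHom cs (cs.wordProd ω) (x, e) =
      (cs.wordProd ω * x * (cs.wordProd ω)⁻¹, e + ((cs.rightInvSeq ω).count x : ZMod 2)) := by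
  induction ω with
  | nil => simp [end_one_apply]
  | cons i ω ih =>
    rw [cs.wordProd_cons, map_mul, end_mul_apply, ih, signedHom_simple]
    simp only [signedFun, rightInvSeq, List.count_cons]
    have : (cs.wordProd ω * x * (cs.wordProd ω)⁻¹ = cs.simple i) ↔
        ((cs.wordProd ω)⁻¹ * cs.simple i * cs.wordProd ω = x) := by
      constructor
      · intro h; rw [← h]; group
      · intro h; rw [← h]; group
    refine Prod.ext ?_ ?_
    · simp [mul_assoc]
    · simp [this, add_assoc]

theorem mem_rightInvSeq (ω : List B) (i : B)
    (h : cs.length (cs.wordProd ω * cs.simple i) < cs.length (cs.wordProd ω)) :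
    cs.simple i ∈ cs.rightInvSeq ω := by
  classical
  obtain ⟨ν, hν, hνw⟩ := cs.exists_isReduced (cs.wordProd ω * cs.simple i)
  have hnot : cs.simple i ∉ cs.rightInvSeq ν := by
    intro hm
    have := (cs.isRightInversion_of_mem_rightInvSeq hν hm).2
    rw [← hνw] at this
    simp at this
    omega
  have h1 := signedHom_wordProd cs ν (cs.simple i) 1
  rw [List.count_eq_zero_of_not_mem hnot, ← hνw] at h1
  have h2 := signedHom_wordProd cs ω (cs.simple i) 0
  have h3 : signedHom cs (cs.wordProd ω) (cs.simple i, 0) =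
      signedHom cs (cs.wordProd ω * cs.simple i) (cs.simple i, 1) := by
    rw [map_mul, end_mul_apply, signedHom_simple]
    simp only [signedFun]
    simp
    rfl
  by_contra hc
  rw [List.count_eq_zero_of_not_mem hc, h3, h1] at h2
  simpa using congrArg Prod.snd h2

theorem mem_leftInvSeq (ω : List B) (i : B)
    (h : cs.length (cs.simple i * cs.wordProd ω) < cs.length (cs.wordProd ω)) :
    cs.simple i ∈ cs.leftInvSeq ω := by
  have := mem_rightInvSeq cs ω.reverse i (by
    rw [cs.wordProd_reverse, cs.length_inv, ← cs.length_inv]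
    simpa using h)
  rw [cs.rightInvSeq_reverse] at this
  simpa using this

/-! ### The geometric representation -/

variable (M) in
/-- Twice the standard bilinear form. -/
noncomputable def form (i : B) : Module.Dual ℝ (B →₀ ℝ) :=
  Finsupp.linearCombination ℝ (fun j => -2 * Real.cos (Real.pi / (M i j : ℝ)))

variable (M) in
/-- Simple roots. -/
noncomputable def root (i : B) : B →₀ ℝ := Finsupp.single i 1

theorem form_root (i j : B) : form M i (root j) = -2 * Real.cos (Real.pi / (M i j : ℝ)) := by
  simp [form, root]

theorem form_root_self (i : B) : form M i (root i) = 2 := by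
  simp [form_root]

variable (M) in
/-- Simple reflections in the geometric representation. -/
noncomputable def refl (i : B) : (B →₀ ℝ) ≃ₗ[ℝ] (B →₀ ℝ) :=
  Module.reflection (form_root_self (M := M) i)

theorem refl_apply (i : B) (x : B →₀ ℝ) : refl M i x = x - form M i x • root i :=
  Module.reflection_apply _ _

theorem refl_liftable : M.IsLiftable (refl M) := by
  intro i j
  rcases eq_or_ne (M i j) 0 with h0 | h0
  · rw [h0, pow_zero]
  rcases eq_or_ne (M i j) 1 with h1 | h1
  · have : i = j := by
      by_contra h
      exact M.off_diagonal i j h h1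
    subst this
    rw [h1, pow_one]
    refine LinearEquiv.ext fun x => ?_
    rw [LinearEquiv.mul_apply, refl_apply, refl_apply, map_sub, map_smul, form_root_self,
      LinearEquiv.coe_one, id]
    module
  refine LinearEquiv.ext fun z => ?_
  rcases eq_or_ne (M i j) 2 with h2 | h2
  · have hij : form M i (root j) = 0 := by rw [form_root, h2]; simp
    have hji : form M j (root i) = 0 := by rw [form_root, M.symmetric, h2]; simp
    rw [h2, pow_two]
    simp only [LinearEquiv.mul_apply, refl_apply, map_sub, map_smul, hij, hji, form_root_self,
      LinearEquiv.coe_one, id]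
    module
  set m := M i j with hm
  have hm3 : 3 ≤ m := by omega
  have hm3' : (3 : ℝ) ≤ m := by exact_mod_cast hm3
  set θ : ℝ := Real.pi / m with hθ
  have hmθ : (m : ℝ) * θ = Real.pi := by rw [hθ]; field_simp
  have hsin : Real.sin (2 * θ) ≠ 0 := by
    apply ne_of_gt
    apply Real.sin_pos_of_pos_of_lt_pi
    · rw [hθ]; positivity
    · nlinarith [Real.pi_pos, show 0 < θ by rw [hθ]; positivity]
  have ht : 2 * Real.cos (2 * θ) = form M i (root j) * form M j (root i) - 2 := by
    rw [form_root, form_root, M.symmetric j i, ← hm, ← hθ, Real.cos_two_mul]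
    ring
  have hS : ∀ n : ℤ, (Polynomial.Chebyshev.S ℝ n).eval (2 * Real.cos (2 * θ)) =
      Real.sin ((n + 1) * (2 * θ)) / Real.sin (2 * θ) := by
    intro n
    rw [eq_div_iff hsin]
    exact Polynomial.Chebyshev.S_two_mul_real_cos _ _
  have key := Module.reflection_mul_reflection_pow_apply (form_root_self (M := M) i)
    (form_root_self (M := M) j) m z (2 * Real.cos (2 * θ)) ht
  change ((refl M i * refl M j) ^ m) z = _ at key
  rw [key]
  rcases Nat.even_or_odd' m with ⟨k, hk | hk⟩
  · have e1 : ((m : ℤ) - 2) / 2 = k - 1 := by omega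
    have e2 : ((m : ℤ) - 1) / 2 = k - 1 := by omega
    have hz : (Polynomial.Chebyshev.S ℝ ((k : ℤ) - 1)).eval (2 * Real.cos (2 * θ)) = 0 := by
      rw [hS]
      have : (((k : ℤ) - 1 : ℤ) + 1 : ℝ) * (2 * θ) = Real.pi := by
        rw [← hmθ, hk]; push_cast; ring
      rw [this]; simp
    rw [e1, e2, hz]
    simp
  · have e1 : ((m : ℤ) - 2) / 2 = k - 1 := by omega
    have e2 : ((m : ℤ) - 1) / 2 = k := by omega
    have e3 : ((m : ℤ) - 3) / 2 = k - 1 := by omega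
    have e4 : (m : ℤ) / 2 = k := by omega
    have hz : (Polynomial.Chebyshev.S ℝ (k : ℤ)).eval (2 * Real.cos (2 * θ)) +
        (Polynomial.Chebyshev.S ℝ ((k : ℤ) - 1)).eval (2 * Real.cos (2 * θ)) = 0 := by
      rw [hS, hS, ← add_div]
      have ha : (((k : ℤ) : ℝ) + 1) * (2 * θ) = Real.pi + θ := by
        rw [← hmθ, hk]; push_cast; ring
      have hb : (((k : ℤ) - 1 : ℤ) + 1 : ℝ) * (2 * θ) = Real.pi - θ := by
        rw [← hmθ, hk]; push_cast; ring
      rw [ha, hb, add_comm Real.pi, Real.sin_add_pi, Real.sin_pi_sub]; simp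
    rw [e1, e2, e3, e4, hz]
    simp

/-- The geometric representation. -/
noncomputable def rep : W →* ((B →₀ ℝ) ≃ₗ[ℝ] (B →₀ ℝ)) :=
  cs.lift ⟨refl M, refl_liftable⟩

theorem rep_simple (i : B) : rep cs (cs.simple i) = refl M i :=
  cs.lift_apply_simple _ i

theorem rep_wordProd_apply_of_notMem (L : List B) (k : B) (hk : k ∉ L) (x : B →₀ ℝ) :
    rep cs (cs.wordProd L) x k = x k := by
  induction L with
  | nil => simp
  | cons i L ih =>
    simp only [List.mem_cons, not_or] at hk
    rw [cs.wordProd_cons, map_mul, LinearEquiv.mul_apply, rep_simple, refl_apply]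
    simp [ih hk.2, root, Ne.symm hk.1]

theorem form_ne_zero (a b : B)
    (h : cs.simple b * cs.simple a ≠ cs.simple a * cs.simple b) : form M a (root b) ≠ 0 := by
  rw [form_root]
  have hab : a ≠ b := by rintro rfl; exact h rfl
  have h1 := M.off_diagonal a b hab
  have h2 : M a b ≠ 2 := by
    intro h2
    have := cs.simple_mul_simple_pow a b
    rw [h2, pow_two, mul_eq_one_iff_eq_inv] at this
    apply h
    rw [this]; simp
  rcases eq_or_ne (M a b) 0 with h0 | h0
  · rw [h0]; simp
  have hm3 : 3 ≤ M a b := by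
    change M a b ≠ 1 at h1
    omega
  have hm3' : (3 : ℝ) ≤ M a b := by exact_mod_cast hm3
  have : 0 < Real.cos (Real.pi / (M a b : ℝ)) := by
    apply Real.cos_pos_of_mem_Ioo
    constructor
    · have : 0 < Real.pi / (M a b : ℝ) := by positivity
      linarith [Real.pi_pos]
    · apply div_lt_div_of_pos_left Real.pi_pos <;> linarith
  intro hh
  linarith

theorem no_conj (L : List B) (a b s : B) (ha : a ∉ L) (hb : b ∉ L)
    (hc : cs.simple b * cs.simple a ≠ cs.simple a * cs.simple b)
    (h : cs.simple s = cs.wordProd (L ++ [a]) * cs.simple b * (cs.wordProd (L ++ [a]))⁻¹) :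
    False := by
  have hab : a ≠ b := by rintro rfl; exact hc rfl
  set x := rep cs (cs.wordProd (L ++ [a])) (root b) with hx
  have hx' : x = rep cs (cs.wordProd L) (root b - form M a (root b) • root a) := by
    rw [hx, cs.wordProd_append, map_mul, LinearEquiv.mul_apply, cs.wordProd_singleton, rep_simple,
      refl_apply]
  have hxb : x b = 1 := by
    rw [hx', rep_wordProd_apply_of_notMem cs L b hb]
    simp [root, hab]
  have hxa : x a ≠ 0 := by
    rw [hx', rep_wordProd_apply_of_notMem cs L a ha]
    simp [root, hab.symm]
    simpa [root] using form_ne_zero cs a b hc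
  have hneg : refl M s x = -x := by
    rw [← rep_simple cs, hx, ← LinearEquiv.mul_apply, ← map_mul, h, inv_mul_cancel_right, map_mul,
      LinearEquiv.mul_apply, rep_simple, refl_apply, form_root_self, ← map_neg]
    congr 1
    module
  rw [refl_apply] at hneg
  have hco : ∀ k, k ≠ s → x k = 0 := by
    intro k hk
    have := DFunLike.congr_fun hneg k
    simp [root, hk.symm] at this
    linarith
  have h1 : b = s := by
    by_contra hne
    rw [hco b hne] at hxb
    simp at hxb
  have h2 : a = s := by
    by_contra hne
    exact hxa (hco a hne)
  exact hab (h2.trans h1.symm)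

end CoxeterChain


/-- Let `t 0, …, t r` be pairwise distinct simple reflections such that
consecutive ones do not commute, let `w` satisfy `t 0 * ⋯ * t r ≤ w` in the Bruhat
order, and let `s` be a simple reflection different from `t 0`. Then
`t 0 * ⋯ * t r ≤ s * w` in the Bruhat order. -/
theorem chain_le_mul_simple_of_ne
    {B : Type*} {W : Type*} [Group W] {M : CoxeterMatrix B} (cs : CoxeterSystem M W)
    (r : ℕ) (t : Fin (r + 1) → B)
    (hdist : Function.Injective fun i => cs.simple (t i))
    (hnc : ∀ i : Fin r,
      cs.simple (t i.succ) * cs.simple (t i.castSucc) ≠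
        cs.simple (t i.castSucc) * cs.simple (t i.succ))
    (w : W) (hle : cs.bruhatLE (cs.wordProd (List.ofFn t)) w)
    (s : B) (hs : cs.simple s ≠ cs.simple (t 0)) :
    cs.bruhatLE (cs.wordProd (List.ofFn t)) (cs.simple s * w) := by
  intro ω hω hωw
  have hw : w = cs.simple s * cs.wordProd ω := by rw [hωw]; simp
  rcases cs.length_simple_mul (cs.wordProd ω) s with hl | hl
  · have hred : cs.IsReduced (s :: ω) := by
      rw [CoxeterSystem.IsReduced, cs.wordProd_cons, hl, hω.eq]; simp
    obtain ⟨ω', hsub, hr, hv⟩ := hle (s :: ω) hred (by rw [cs.wordProd_cons, hw])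
    rcases List.sublist_cons_iff.1 hsub with hsub | ⟨ν, rfl, hsub⟩
    · exact ⟨ω', hsub, hr, hv⟩
    exfalso
    have hdesc : cs.length (cs.simple s * cs.wordProd (List.ofFn t)) <
        cs.length (cs.wordProd (List.ofFn t)) := by
      rw [← hv, hr.eq, cs.wordProd_cons]
      simp only [CoxeterSystem.simple_mul_simple_cancel_left, List.length_cons]
      have := cs.length_wordProd_le ν
      omega
    have hmem := CoxeterChain.mem_leftInvSeq cs _ s hdesc
    obtain ⟨j, hj, hjs⟩ := List.mem_iff_getElem.1 hmem
    have hj' : j < (List.ofFn t).length := by simpa using hj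
    rw [cs.getElem_leftInvSeq _ j hj'] at hjs
    have hinj : Function.Injective t := fun a b hab => hdist (congrArg cs.simple hab)
    rcases j with _ | j
    · apply hs
      rw [← hjs]; simp
    · have hjr : j < r := by simpa using hj'
      have hnd : (List.ofFn t).Nodup := List.nodup_ofFn.2 hinj
      have htake : (List.ofFn t).take (j + 1) =
          (List.ofFn t).take j ++ [t (Fin.castSucc ⟨j, hjr⟩)] := by
        rw [List.take_succ_eq_append_getElem (by simp; omega), List.getElem_ofFn]
        rfl
      have hb : (List.ofFn t)[j + 1] = t (Fin.succ ⟨j, hjr⟩) := by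
        simp
      have hnm : ∀ k : Fin (r + 1), j ≤ k.1 → t k ∉ (List.ofFn t).take j := by
        intro k hk hmem
        obtain ⟨i, hi, hit⟩ := List.mem_iff_getElem.1 hmem
        simp only [List.getElem_take, List.getElem_ofFn] at hit
        have := congrArg Fin.val (hinj hit)
        simp at this hi
        omega
      rw [htake, hb] at hjs
      exact CoxeterChain.no_conj cs _ _ _ s (hnm _ (by simp)) (hnm _ (by simp))
        (hnc ⟨j, hjr⟩) hjs.symm
  · have hmem := CoxeterChain.mem_leftInvSeq cs ω s (by omega)
    obtain ⟨j, hj, hjs⟩ := List.mem_iff_getElem.1 hmem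
    have hj' : j < ω.length := by simpa using hj
    have he := cs.getD_leftInvSeq_mul_wordProd ω j
    rw [List.getD_eq_getElem _ 1 hj, hjs] at he
    have hlen := List.length_eraseIdx_add_one hj'
    have hred : cs.IsReduced (ω.eraseIdx j) := by
      have := hω.eq
      rw [CoxeterSystem.IsReduced, ← he]
      omega
    obtain ⟨ω', hsub, hr, hv⟩ := hle _ hred (by rw [← he, hw])
    exact ⟨ω', hsub.trans (List.eraseIdx_sublist ω j), hr, hv⟩
end

section
/- Let (W,S) be a Coxeter system and let t_0, t_1, …, t_r be pairwise distinct elements of S such that t_i t_{i-1} ≠ t_{i-1} t_i for all i = 1, …, r. Let w ∈ W be such that t_0 t_1 ⋯ t_r ≤ w in the Bruhat order, and let s ∈ S with s ≠ t_0. Then t_r belongs to the support supp(s w) of the element s w. -/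
namespace ChainSupport

open CoxeterSystem Polynomial Polynomial.Chebyshev

noncomputable section

variable {B : Type*} {W : Type*} [Group W] {M : CoxeterMatrix B} (cs : CoxeterSystem M W)

/-! ### The exchange property -/

open Classical in
/-- The indicator of a proposition in `ZMod 2`. -/
def ind (p : Prop) : ZMod 2 := if p then 1 else 0

theorem ind_congr {p q : Prop} (h : p ↔ q) : ind p = ind q := by
  rw [propext h]

/-- The action of a simple reflection on signed group elements. -/
def act (i : B) : Function.End (W × ZMod 2) :=
  fun x => (cs.simple i * x.1 * cs.simple i, x.2 + ind (x.1 = cs.simple i))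

theorem conj_pow (i j : B) (n : ℕ) :
    (cs.simple i * cs.simple j) ^ n * cs.simple j * (cs.simple i * cs.simple j) ^ n
      = cs.simple j := by
  induction n with
  | zero => simp
  | succ n ih =>
    calc _ = (cs.simple i * cs.simple j) ^ n * ((cs.simple i * cs.simple j) * cs.simple j *
        (cs.simple i * cs.simple j)) * (cs.simple i * cs.simple j) ^ n := by
          rw [pow_succ (cs.simple i * cs.simple j) n]
          nth_rewrite 2 [← pow_succ]
          rw [pow_succ']
          simp only [mul_assoc]
      _ = _ := by
        have h1 : (cs.simple i * cs.simple j) * cs.simple j * (cs.simple i * cs.simple j)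
            = cs.simple j := by simp [mul_assoc]
        rw [h1, ih]

theorem act_pow (i j : B) (n : ℕ) (g : W) (e : ZMod 2) :
    ((act cs i * act cs j) ^ n) (g, e) =
      ((cs.simple i * cs.simple j) ^ n * g * ((cs.simple i * cs.simple j) ^ n)⁻¹,
        e + ∑ k ∈ Finset.range (2 * n), ind ((cs.simple i * cs.simple j) ^ k * g = cs.simple j)) := by
  induction n with
  | zero =>
    simp
    rfl
  | succ n ih =>
    rw [pow_succ']
    change act cs i (act cs j (((act cs i * act cs j) ^ n) (g, e))) = _
    rw [ih, show 2 * (n + 1) = 2 * n + 1 + 1 by ring, Finset.sum_range_succ, Finset.sum_range_succ]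
    set a := cs.simple i * cs.simple j with ha
    have hc := conj_pow cs i j n
    rw [← ha] at hc
    have hja : cs.simple i = a * cs.simple j := by simp [ha]
    have hai : a⁻¹ = cs.simple j * cs.simple i := by simp [ha]
    have h1 : (a ^ n * g * (a ^ n)⁻¹ = cs.simple j) ↔ (a ^ (2 * n) * g = cs.simple j) := by
      rw [mul_inv_eq_iff_eq_mul, two_mul, pow_add, mul_assoc (a ^ n) (a ^ n) g]
      constructor
      · intro h
        rw [h, ← mul_assoc, hc]
      · intro h
        apply mul_left_cancel (a := a ^ n)
        rw [h, ← mul_assoc, hc]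
    have h2 : (cs.simple j * (a ^ n * g * (a ^ n)⁻¹) * cs.simple j = cs.simple i) ↔
        (a ^ (2 * n + 1) * g = cs.simple j) := by
      have h3 : (cs.simple j * (a ^ n * g * (a ^ n)⁻¹) * cs.simple j = cs.simple i) ↔
          a ^ n * g * (a ^ n)⁻¹ = a⁻¹ * cs.simple j := by
        rw [hai]
        constructor
        · intro h
          rw [← h]
          simp [mul_assoc]
        · intro h
          rw [h]
          simp [mul_assoc]
      rw [h3, mul_inv_eq_iff_eq_mul, pow_succ', two_mul, pow_add]
      constructor
      · intro h
        calc a * (a ^ n * a ^ n) * g = a * a ^ n * (a ^ n * g) := by simp only [mul_assoc]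
          _ = a ^ n * cs.simple j * a ^ n := by
            rw [h, ← pow_succ', pow_succ]; simp [mul_assoc]
          _ = _ := hc
      · intro h
        apply mul_left_cancel (a := a ^ n * a)
        calc a ^ n * a * (a ^ n * g) = a * (a ^ n * a ^ n) * g := by
              rw [← pow_succ, pow_succ']; simp only [mul_assoc]
          _ = a ^ n * cs.simple j * a ^ n := by rw [h, hc]
          _ = _ := by simp [mul_assoc]
    simp only [act]
    rw [ind_congr h1, ind_congr h2, pow_succ' a n]
    refine Prod.ext ?_ ?_
    · simp only [mul_inv_rev, hai]
      simp only [ha, mul_assoc]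
    · simp only [add_assoc]

theorem act_liftable : M.IsLiftable (act cs) := by
  intro i j
  funext x
  obtain ⟨g, e⟩ := x
  rw [act_pow, cs.simple_mul_simple_pow, two_mul, Finset.sum_range_add]
  have : ∀ k, ind ((cs.simple i * cs.simple j) ^ (M i j + k) * g = cs.simple j) =
      ind ((cs.simple i * cs.simple j) ^ k * g = cs.simple j) := by
    intro k
    rw [pow_add, cs.simple_mul_simple_pow, one_mul]
  simp only [this, CharTwo.add_self_eq_zero]
  simp
  rfl

/-- The action of the group on signed group elements. -/
def actHom : W →* Function.End (W × ZMod 2) := cs.lift ⟨act cs, act_liftable cs⟩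

open Classical in
theorem actHom_word (ω : List B) (g : W) (e : ZMod 2) :
    (actHom cs (cs.wordProd ω)⁻¹ (g, e)).2 = e + ((cs.leftInvSeq ω).count g : ZMod 2) := by
  induction ω generalizing g e with
  | nil =>
    simp
    rfl
  | cons i ω ih =>
    rw [wordProd_cons, mul_inv_rev, inv_simple, map_mul]
    change (actHom cs (cs.wordProd ω)⁻¹ (actHom cs (cs.simple i) (g, e))).2 = _
    have h1 : actHom cs (cs.simple i) = act cs i := cs.lift_apply_simple (act_liftable cs) i
    rw [h1]
    simp only [act]
    rw [ih, leftInvSeq, List.count_cons]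
    have h2 : List.count g (List.map (MulAut.conj (cs.simple i)) (cs.leftInvSeq ω)) =
        List.count (cs.simple i * g * cs.simple i) (cs.leftInvSeq ω) := by
      have h3 : g = MulAut.conj (cs.simple i) (cs.simple i * g * cs.simple i) := by
        simp [mul_assoc]
      conv_lhs => rw [h3]
      exact List.count_map_of_injective _ _ (MulAut.conj (cs.simple i)).injective _
    rw [h2]
    by_cases h : g = cs.simple i
    · simp [ind, h]; ring
    · simp [ind, h, Ne.symm h]

/-- The exchange property. -/
theorem exchange (ω : List B) (hω : cs.IsReduced ω) (i : B)
    (h : cs.IsLeftDescent (cs.wordProd ω) i) :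
    ∃ j, cs.IsReduced (ω.eraseIdx j) ∧
      cs.wordProd (ω.eraseIdx j) = cs.simple i * cs.wordProd ω := by
  classical
  obtain ⟨η, hη, hηw⟩ := cs.exists_isReduced (cs.simple i * cs.wordProd ω)
  have hlen := cs.isLeftDescent_iff.1 h
  have hprod : cs.wordProd (i :: η) = cs.wordProd ω := by
    rw [wordProd_cons, ← hηw]; simp
  have hred : cs.IsReduced (i :: η) := by
    unfold CoxeterSystem.IsReduced at *
    rw [hprod, ← hlen, hηw, hη]; simp
  have hnd := hred.nodup_leftInvSeq
  have hc1 : (cs.leftInvSeq (i :: η)).count (cs.simple i) = 1 :=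
    List.count_eq_one_of_mem hnd (by simp [leftInvSeq])
  have e1 := actHom_word cs (i :: η) (cs.simple i) 0
  have e2 := actHom_word cs ω (cs.simple i) 0
  rw [hprod, e2, hc1] at e1
  have hmem : cs.simple i ∈ cs.leftInvSeq ω := by
    by_contra hn
    rw [List.count_eq_zero_of_not_mem hn] at e1
    simp at e1
  obtain ⟨j, hj, hji⟩ := List.getElem_of_mem hmem
  refine ⟨j, ?_, ?_⟩
  · have := cs.getD_leftInvSeq_mul_wordProd ω j
    rw [List.getD_eq_getElem _ _ hj, hji] at this
    unfold CoxeterSystem.IsReduced at *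
    have hj' : j < ω.length := by simpa using hj
    rw [← this, List.length_eraseIdx_of_lt hj']
    omega
  · rw [← cs.getD_leftInvSeq_mul_wordProd, List.getD_eq_getElem _ _ hj, hji]

/-! ### A geometric representation -/

variable (M) in
/-- Entries of the Cartan matrix. -/
def cartan (i j : B) : ℝ := -(2 * Real.cos (Real.pi / (M i j : ℝ)))

/-- The space of the representation: weights and roots. -/
abbrev Sp (B : Type*) : Type _ := (B → ℝ) × (B →₀ ℝ)

variable (M) in
/-- Coroots. -/
def coroot (i : B) : Module.Dual ℝ (Sp B) :=
  (LinearMap.proj i : (B → ℝ) →ₗ[ℝ] ℝ) ∘ₗ LinearMap.fst ℝ _ _ +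
    Finsupp.linearCombination ℝ (cartan M i) ∘ₗ LinearMap.snd ℝ _ _

/-- Roots. -/
def root (i : B) : Sp B := (0, Finsupp.single i 1)

theorem coroot_root (i j : B) : coroot M i (root j) = cartan M i j := by
  simp [coroot, root]

theorem coroot_root_self (i : B) : coroot M i (root i) = 2 := by
  simp [coroot_root, cartan]

variable (M) in
/-- Simple reflections acting on the space. -/
def refl (i : B) : Sp B ≃ₗ[ℝ] Sp B := Module.reflection (coroot_root_self (M := M) i)

theorem refl_apply (i : B) (x : Sp B) : refl M i x = x - coroot M i x • root i :=
  Module.reflection_apply _ _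

theorem S_vanish (m : ℕ) (hm : 3 ≤ m) (t : ℝ) (ht : t = 2 * Real.cos (2 * Real.pi / m)) :
    (S ℝ (((m : ℤ) - 2) / 2)).eval t *
      ((S ℝ (((m : ℤ) - 1) / 2)).eval t + (S ℝ (((m : ℤ) - 3) / 2)).eval t) = 0 ∧
    (S ℝ (((m : ℤ) - 1) / 2)).eval t *
      ((S ℝ ((m : ℤ) / 2)).eval t + (S ℝ (((m : ℤ) - 2) / 2)).eval t) = 0 := by
  set θ : ℝ := 2 * Real.pi / m with hθ
  have hm0 : (0 : ℝ) < m := by positivity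
  have hm3 : (3 : ℝ) ≤ m := by exact_mod_cast hm
  have hpi := Real.pi_pos
  have hsin : Real.sin θ ≠ 0 := by
    apply ne_of_gt
    apply Real.sin_pos_of_pos_of_lt_pi
    · positivity
    · rw [hθ, div_lt_iff₀ hm0]; nlinarith
  have hS := fun n : ℤ => Polynomial.Chebyshev.S_two_mul_real_cos θ n
  rw [← ht] at hS
  have hmθ : (m : ℝ) * θ = 2 * Real.pi := by rw [hθ]; field_simp
  rcases Nat.even_or_odd' m with ⟨k, hk | hk⟩
  · have hz : (S ℝ ((k : ℤ) - 1)).eval t = 0 := by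
      have := hS ((k : ℤ) - 1)
      have h2 : (((k : ℤ) - 1 : ℤ) + 1 : ℝ) * θ = Real.pi := by
        push_cast
        rw [hk] at hmθ; push_cast at hmθ; linarith
      rw [h2, Real.sin_pi] at this
      exact (mul_eq_zero.1 this).resolve_right hsin
    rw [show ((m : ℤ) - 2) / 2 = (k : ℤ) - 1 by omega,
      show ((m : ℤ) - 1) / 2 = (k : ℤ) - 1 by omega, hz]
    simp
  · have hz : (S ℝ (k : ℤ)).eval t + (S ℝ ((k : ℤ) - 1)).eval t = 0 := by
      have h1 := hS k
      have h2 := hS ((k : ℤ) - 1)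
      have h3 : Real.sin ((((k : ℤ)) + 1 : ℝ) * θ) = - Real.sin ((((k : ℤ) - 1 : ℤ) + 1 : ℝ) * θ) := by
        rw [← Real.sin_neg, ← Real.sin_add_two_pi (-((((k : ℤ) - 1 : ℤ) + 1 : ℝ) * θ))]
        congr 1
        rw [← hmθ, hk]; push_cast; ring
      refine (mul_eq_zero.1 (?_ : _ * Real.sin θ = 0)).resolve_right hsin
      rw [add_mul, h1, h2, h3]; ring
    rw [show ((m : ℤ) - 2) / 2 = (k : ℤ) - 1 by omega,
      show ((m : ℤ) - 1) / 2 = (k : ℤ) by omega,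
      show ((m : ℤ) - 3) / 2 = (k : ℤ) - 1 by omega,
      show (m : ℤ) / 2 = (k : ℤ) by omega, hz]
    simp

theorem refl_liftable : M.IsLiftable (refl M) := by
  intro i j
  by_cases hij : i = j
  · subst hij
    rw [M.diagonal, pow_one]
    ext1 x
    exact Module.involutive_reflection (coroot_root_self (M := M) i) x
  have h1 : M i j ≠ 1 := M.off_diagonal i j hij
  ext1 z
  have key := Module.reflection_mul_reflection_pow_apply (coroot_root_self (M := M) i)
    (coroot_root_self (M := M) j) (M i j) z
  have e1 := coroot_root (M := M) i j
  have e2 : coroot M j (root i) = cartan M i j := by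
    rw [coroot_root]; unfold cartan; rw [M.symmetric]
  change ((refl M i * refl M j) ^ M i j) z = z
  change ((refl M i * refl M j) ^ M i j) z = _ at key
  rcases Nat.lt_or_ge (M i j) 3 with hlt | hge
  · have h02 : M i j = 0 ∨ M i j = 2 := by omega
    rcases h02 with h0 | h2
    · rw [h0]; rfl
    · have hc : cartan M i j = 0 := by
        simp [cartan, h2]
      rw [key, e1, e2, hc, h2]
      norm_num
      abel
  · have ht : coroot M i (root j) * coroot M j (root i) - 2
        = 2 * Real.cos (2 * Real.pi / (M i j : ℝ)) := by
      rw [e1, e2, mul_div_assoc, Real.cos_two_mul]; unfold cartan; ring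
    obtain ⟨hA, hB⟩ := S_vanish (M i j) hge _ ht
    rw [key, hA, hB]
    simp

/-- The representation. -/
def rep : W →* (Sp B ≃ₗ[ℝ] Sp B) := cs.lift ⟨refl M, refl_liftable⟩

theorem rep_simple (i : B) (x : Sp B) :
    rep cs (cs.simple i) x = x - coroot M i x • root i := by
  rw [rep, cs.lift_apply_simple refl_liftable, refl_apply]

open Classical in
/-- Fundamental weights. -/
def weight (i : B) : Sp B := (Pi.single i 1, 0)

theorem coroot_weight_ne {i j : B} (h : i ≠ j) : coroot M i (weight j) = 0 := by
  simp [coroot, weight, h]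

theorem coroot_weight_self (i : B) : coroot M i (weight i) = 1 := by
  simp [coroot, weight]

theorem rep_weight (i : B) (ω : List B) (h : i ∉ ω) :
    rep cs (cs.wordProd ω) (weight i) = weight i := by
  induction ω with
  | nil => simp
  | cons j ω ih =>
    rw [List.mem_cons, not_or] at h
    rw [wordProd_cons, map_mul, LinearEquiv.mul_apply, ih h.2, rep_simple,
      coroot_weight_ne (Ne.symm h.1)]
    simp

theorem cartan_nonpos {i j : B} (h : i ≠ j) : cartan M i j ≤ 0 := by
  have h1 : M i j ≠ 1 := M.off_diagonal i j h
  unfold cartan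
  have : 0 ≤ Real.cos (Real.pi / (M i j : ℝ)) := by
    have hpi := Real.pi_pos
    rcases Nat.eq_zero_or_pos (M i j) with h0 | h0
    · simp [h0]
    · have h2 : (2 : ℝ) ≤ M i j := by exact_mod_cast (by omega : 2 ≤ M i j)
      apply Real.cos_nonneg_of_neg_pi_div_two_le_of_le
      · have : 0 ≤ Real.pi / (M i j : ℝ) := by positivity
        linarith
      · exact div_le_div_of_nonneg_left hpi.le (by norm_num) h2
  linarith

theorem cartan_neg {i j : B}
    (h : cs.simple i * cs.simple j ≠ cs.simple j * cs.simple i) : cartan M i j < 0 := by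
  have hij : i ≠ j := by rintro rfl; exact h rfl
  have h1 : M i j ≠ 1 := M.off_diagonal i j hij
  have h2 : M i j ≠ 2 := by
    intro h2
    apply h
    have := cs.simple_mul_simple_pow i j
    rw [h2, pow_two, mul_eq_one_iff_eq_inv] at this
    simpa using this
  unfold cartan
  have : 0 < Real.cos (Real.pi / (M i j : ℝ)) := by
    have hpi := Real.pi_pos
    rcases Nat.eq_zero_or_pos (M i j) with h0 | h0
    · simp [h0]
    · have h3 : (3 : ℝ) ≤ M i j := by exact_mod_cast (by omega : 3 ≤ M i j)
      apply Real.cos_pos_of_mem_Ioo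
      constructor
      · have : 0 ≤ Real.pi / (M i j : ℝ) := by positivity
        linarith
      · exact div_lt_div_of_pos_left hpi (by norm_num) (by linarith)
  linarith

/-- Along a non-commuting chain ending in `b`, the image of the root of `b` has nonnegative
coefficients, supported on the chain, with positive leading coefficient. -/
theorem chain_root (b : B) (a : B) (l : List B)
    (hnd : (a :: (l ++ [b])).Nodup)
    (hch : List.IsChain (fun i j => cs.simple i * cs.simple j ≠ cs.simple j * cs.simple i)
      (a :: (l ++ [b]))) :
    ∃ x : B →₀ ℝ, rep cs (cs.wordProd (a :: l)) (root b) = (0, x) ∧ (∀ j, 0 ≤ x j) ∧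
      (∀ j, j ∉ a :: (l ++ [b]) → x j = 0) ∧ 0 < x a := by
  classical
  have step : ∀ (a c : B) (L : List B) (y : B →₀ ℝ), a ∉ (c :: L) →
      cs.simple a * cs.simple c ≠ cs.simple c * cs.simple a →
      (∀ j, 0 ≤ y j) → (∀ j, j ∉ c :: L → y j = 0) → 0 < y c →
      ∃ x : B →₀ ℝ, rep cs (cs.simple a) (0, y) = (0, x) ∧ (∀ j, 0 ≤ x j) ∧
      (∀ j, j ∉ a :: (c :: L) → x j = 0) ∧ 0 < x a := by
    intro a c L y ha hac hy hs hc
    have hya : y a = 0 := hs a ha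
    have hval : coroot M a (0, y) < 0 := by
      have : coroot M a (0, y) = ∑ j ∈ y.support, y j * cartan M a j := by
        simp [coroot, Finsupp.linearCombination_apply, Finsupp.sum]
      rw [this]
      apply Finset.sum_neg'
      · intro j hj
        have : a ≠ j := by
          rintro rfl
          simp [hya] at hj
        exact mul_nonpos_of_nonneg_of_nonpos (hy j) (cartan_nonpos this)
      · exact ⟨c, by simp [hc.ne'], mul_neg_of_pos_of_neg hc (cartan_neg cs hac)⟩
    refine ⟨y - coroot M a (0, y) • Finsupp.single a 1, ?_, ?_, ?_, ?_⟩
    · rw [rep_simple]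
      simp [root]
    · intro j
      by_cases hj : a = j
      · subst hj; simp [hya, hval.le]
      · simp [hj, hy j]
    · intro j hj
      rw [List.mem_cons, not_or] at hj
      simp [Ne.symm hj.1, hs j hj.2]
    · simp [hya, hval]
  induction l generalizing a with
  | nil =>
    have h1 : a ∉ [b] := (List.nodup_cons.1 hnd).1
    obtain ⟨x, hx⟩ := step a b [] (Finsupp.single b 1) h1 (by simpa using hch)
      (fun j => by by_cases h : b = j <;> simp [h])
      (fun j hj => by
        have : j ≠ b := by simpa using hj
        simp [this.symm]) (by simp)
    exact ⟨x, by simpa [root] using hx⟩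
  | cons c l ih =>
    obtain ⟨y, hy1, hy2, hy3, hy4⟩ := ih c (List.nodup_cons.1 hnd).2
      (List.isChain_cons_cons.1 hch).2
    obtain ⟨x, hx⟩ := step a c (l ++ [b]) y (List.nodup_cons.1 hnd).1
      (List.isChain_cons_cons.1 hch).1 hy2 hy3 hy4
    refine ⟨x, ?_, hx.2⟩
    rw [wordProd_cons, map_mul, LinearEquiv.mul_apply, hy1, hx.1]

/-- A word avoiding `b` cannot represent `π l * s b` with `b ∉ l`. -/
theorem no_avoid (b : B) (l ω : List B) (hl : b ∉ l) (hω : b ∉ ω)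
    (h : cs.wordProd ω = cs.wordProd (l ++ [b])) : False := by
  have h1 := rep_weight cs b ω hω
  rw [h, wordProd_append, wordProd_singleton, map_mul, LinearEquiv.mul_apply, rep_simple,
    coroot_weight_self, map_sub, rep_weight cs b l hl] at h1
  have h2 : rep cs (cs.wordProd l) (root b) = 0 := by simpa using h1
  rw [LinearEquiv.map_eq_zero_iff] at h2
  have := coroot_root_self (M := M) b
  rw [h2] at this
  simp at this

/-- The end of a nontrivial chain cannot be moved to the front. -/
theorem no_front (b a : B) (l ω : List B)
    (hnd : (a :: (l ++ [b])).Nodup)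
    (hch : List.IsChain (fun i j => cs.simple i * cs.simple j ≠ cs.simple j * cs.simple i)
      (a :: (l ++ [b]))) (hω : b ∉ ω)
    (h : cs.wordProd (b :: ω) = cs.wordProd (a :: (l ++ [b]))) : False := by
  have hl : b ∉ a :: l := by
    have : (b :: (a :: l)).Nodup := by
      have := List.nodup_append_comm.1 (show ((a :: l) ++ [b]).Nodup from hnd)
      simpa using this
    exact (List.nodup_cons.1 this).1
  have h1 := congrArg (fun w => rep cs w (weight b)) h
  rw [← List.cons_append, wordProd_append, wordProd_singleton, wordProd_cons cs b, map_mul, map_mul,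
    LinearEquiv.mul_apply, LinearEquiv.mul_apply, rep_weight cs b ω hω, rep_simple,
    coroot_weight_self, map_sub, rep_weight cs b _ hl] at h1
  have h2 : rep cs (cs.wordProd (a :: l)) (root b) = root b := by simpa using h1.symm
  obtain ⟨x, hx, _, _, hpos⟩ := chain_root cs b a l hnd hch
  rw [h2] at hx
  have hx2 : Finsupp.single b 1 = x := congrArg Prod.snd hx
  have hab : b ≠ a := by
    rintro rfl
    simp at hl
  rw [← hx2] at hpos
  simp [hab] at hpos

end

end ChainSupport


/-- The support of an element `w` of a Coxeter group: the set of simple reflections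
(indexed by `B`) occurring in every (equivalently, some) reduced word for `w`. -/
def CoxeterSystem.support {B : Type*} {W : Type*} [Group W] {M : CoxeterMatrix B}
    (cs : CoxeterSystem M W) (w : W) : Set B :=
  {i : B | ∀ ω : List B, cs.IsReduced ω → cs.wordProd ω = w → i ∈ ω}

/-- Let `t 0, …, t r` be pairwise distinct simple reflections such that
consecutive ones do not commute, let `w` satisfy `t 0 * ⋯ * t r ≤ w` in the Bruhat
order, and let `s` be a simple reflection different from `t 0`. Then `t r` belongs to
the support of `s * w`. -/
theorem last_of_chain_mem_support_mul_simple
    {B : Type*} {W : Type*} [Group W] {M : CoxeterMatrix B} (cs : CoxeterSystem M W)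
    (r : ℕ) (t : Fin (r + 1) → B)
    (hdist : Function.Injective fun i => cs.simple (t i))
    (hnc : ∀ i : Fin r,
      cs.simple (t i.succ) * cs.simple (t i.castSucc) ≠
        cs.simple (t i.castSucc) * cs.simple (t i.succ))
    (w : W) (hle : cs.bruhatLE (cs.wordProd (List.ofFn t)) w)
    (s : B) (hs : cs.simple s ≠ cs.simple (t 0)) :
    t (Fin.last r) ∈ cs.support (cs.simple s * w) := by
  intro ω hω hωw
  by_contra hmem
  have hinj : Function.Injective t := fun i j h => hdist (by simp [h])
  have hsplit : List.ofFn t = List.ofFn (fun i : Fin r => t i.castSucc) ++ [t (Fin.last r)] :=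
    by rw [List.ofFn_succ_last]
  have hnd : (List.ofFn t).Nodup := List.nodup_ofFn.2 hinj
  have hl : t (Fin.last r) ∉ List.ofFn (fun i : Fin r => t i.castSucc) := by
    intro h
    obtain ⟨i, hi⟩ := List.mem_ofFn.1 h
    have := hinj hi
    exact (Fin.castSucc_lt_last i).ne this
  have hw : cs.wordProd (s :: ω) = w := by
    rw [CoxeterSystem.wordProd_cons, hωw]; simp
  by_cases hd : cs.IsLeftDescent (cs.wordProd ω) s
  · obtain ⟨j, hj1, hj2⟩ := ChainSupport.exchange cs ω hω s hd
    obtain ⟨ω', hsub, -, hprod⟩ := hle _ hj1 (by rw [hj2, ← hw, CoxeterSystem.wordProd_cons])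
    rw [hsplit] at hprod
    exact ChainSupport.no_avoid cs _ _ ω' hl
      (fun h => hmem ((List.eraseIdx_sublist ω j).subset (hsub.subset h))) hprod
  · have hred : cs.IsReduced (s :: ω) := by
      have := cs.not_isLeftDescent_iff.1 hd
      unfold CoxeterSystem.IsReduced at *
      rw [CoxeterSystem.wordProd_cons, this, hω]; simp
    obtain ⟨ω', hsub, -, hprod⟩ := hle _ hred hw
    by_cases hm' : t (Fin.last r) ∈ ω'
    · rcases List.sublist_cons_iff.1 hsub with h | ⟨ω'', rfl, h⟩
      · exact hmem (h.subset hm')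
      · have hm'' : t (Fin.last r) ∉ ω'' := fun hh => hmem (h.subset hh)
        have hst : t (Fin.last r) = s := (List.mem_cons.1 hm').resolve_right hm''
        cases r with
        | zero => exact hs (by rw [← hst]; rfl)
        | succ r =>
          have hch : List.IsChain
              (fun i j => cs.simple i * cs.simple j ≠ cs.simple j * cs.simple i)
              (List.ofFn t) := by
            rw [List.isChain_iff_getElem]
            intro i hi
            have hi' : i < r + 1 := by simpa using hi
            have := hnc ⟨i, hi'⟩
            simp only [List.getElem_ofFn]
            exact fun h => this h.symm
          rw [List.ofFn_succ (f := fun i : Fin (r+1) => t i.castSucc), List.cons_append] at hsplit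
          rw [hsplit] at hch hnd hprod
          rw [← hst] at hprod
          exact ChainSupport.no_front cs _ _ _ ω'' hnd hch hm'' hprod
    · rw [hsplit] at hprod
      exact ChainSupport.no_avoid cs _ _ ω' hl hm' hprod
end

section
/- Let (W,S) be a Coxeter system and let t_0, t_1, …, t_r be pairwise distinct elements of S such that t_i t_{i-1} ≠ t_{i-1} t_i for all i = 1, …, r. Let P ⊆ S be a subset with t_0 ∉ P, and let W_P ⊆ W be the standard parabolic subgroup generated by P. Let x ∈ W with t_0 t_1 ⋯ t_r ≤ x in the Bruhat order. Then for every u ∈ W_P one has t_0 t_1 ⋯ t_r ≤ u x in the Bruhat order; in particular t_r belongs to the support supp(u x). -/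
namespace ChainBruhat

open Polynomial

variable {B : Type*} {W : Type*} [Group W] {M : CoxeterMatrix B}

/-! ### The geometric representation -/

/-- Simple coroot functional. -/
noncomputable def coroot (M : CoxeterMatrix B) (i : B) : Module.Dual ℝ (B →₀ ℝ) :=
  Finsupp.linearCombination ℝ (fun j => -2 * Real.cos (Real.pi / (M i j : ℝ)))

/-- Simple root. -/
noncomputable def root (i : B) : B →₀ ℝ := Finsupp.single i 1

lemma coroot_root (i j : B) :
    coroot M i (root j) = -2 * Real.cos (Real.pi / (M i j : ℝ)) := by
  simp [coroot, root]

lemma coroot_root_self (i : B) : coroot M i (root i) = 2 := by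
  rw [coroot_root, M.diagonal]; simp

/-- Simple reflection of the geometric representation. -/
noncomputable def refl (M : CoxeterMatrix B) (i : B) : (B →₀ ℝ) ≃ₗ[ℝ] (B →₀ ℝ) :=
  Module.reflection (coroot_root_self (M := M) i)

lemma refl_apply (i : B) (z : B →₀ ℝ) : refl M i z = z - coroot M i z • root i :=
  Module.reflection_apply _ _

lemma refl_isLiftable (M : CoxeterMatrix B) : M.IsLiftable (refl M) := by
  intro i j
  by_cases hij : i = j
  · subst hij
    rw [M.diagonal, pow_one]
    ext1 z
    exact Module.involutive_reflection (coroot_root_self (M := M) i) z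
  have h1 := M.off_diagonal i j hij
  have hs : M j i = M i j := M.symmetric j i
  generalize hm : M i j = m at *
  by_cases h0 : m = 0
  · simp [h0]
  ext1 z
  set t : ℝ := coroot M i (root j) * coroot M j (root i) - 2 with ht
  have key := Module.reflection_mul_reflection_pow_apply (coroot_root_self (M := M) i)
    (coroot_root_self (M := M) j) m z t ht
  unfold refl
  rw [key]
  rw [coroot_root, coroot_root, hs, hm] at ht
  rw [coroot_root, coroot_root, hs, hm]
  by_cases h2 : m = 2
  · subst h2
    norm_num at ht ⊢
    rw [ht]
    norm_num
    module
  have hm3 : 3 ≤ m := by omega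
  have hm3' : (3 : ℝ) ≤ m := by exact_mod_cast hm3
  have ht' : t = 2 * Real.cos (2 * Real.pi / m) := by
    rw [ht, show 2 * Real.pi / (m : ℝ) = 2 * (Real.pi / m) by ring, Real.cos_two_mul]; ring
  have hsin : Real.sin (2 * Real.pi / m) ≠ 0 := by
    apply ne_of_gt
    apply Real.sin_pos_of_pos_of_lt_pi
    · positivity
    · rw [div_lt_iff₀ (by linarith)]
      nlinarith [Real.pi_pos]
  have hS : ∀ k : ℤ, (Chebyshev.S ℝ k).eval t * Real.sin (2 * Real.pi / m) =
      Real.sin ((k + 1) * (2 * Real.pi / m)) := fun k => by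
    rw [ht']; exact_mod_cast Chebyshev.S_two_mul_real_cos _ k
  rcases Nat.even_or_odd' m with ⟨n, hn | hn⟩
  · have e1 : ((m : ℤ) - 2) / 2 = n - 1 := by omega
    have e2 : ((m : ℤ) - 1) / 2 = n - 1 := by omega
    have hz : (Chebyshev.S ℝ ((n : ℤ) - 1)).eval t = 0 := by
      have := hS ((n : ℤ) - 1)
      have e : ((((n : ℤ) - 1 : ℤ) : ℝ) + 1) * (2 * Real.pi / m) = Real.pi := by
        have : (n : ℝ) ≠ 0 := by
          have : n ≠ 0 := by omega
          exact_mod_cast this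
        rw [hn]; push_cast; field_simp; ring
      rw [e, Real.sin_pi] at this
      exact (mul_eq_zero.mp this).resolve_right hsin
    rw [e1, e2, hz]
    simp
  · have e1 : ((m : ℤ) - 2) / 2 = n - 1 := by omega
    have e2 : ((m : ℤ) - 1) / 2 = n := by omega
    have e3 : ((m : ℤ) - 3) / 2 = n - 1 := by omega
    have e4 : (m : ℤ) / 2 = n := by omega
    have hz : (Chebyshev.S ℝ (n : ℤ)).eval t + (Chebyshev.S ℝ ((n : ℤ) - 1)).eval t = 0 := by
      have h1 := hS ((n : ℤ) - 1)
      have h2 := hS (n : ℤ)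
      have e : (((n : ℤ) : ℝ) + 1) * (2 * Real.pi / m) =
          2 * Real.pi - ((((n : ℤ) - 1 : ℤ) : ℝ) + 1) * (2 * Real.pi / m) := by
        have : (2 * (n : ℝ) + 1) ≠ 0 := by positivity
        rw [hn]; push_cast; field_simp; ring
      rw [e, Real.sin_two_pi_sub] at h2
      have : ((Chebyshev.S ℝ (n : ℤ)).eval t + (Chebyshev.S ℝ ((n : ℤ) - 1)).eval t) *
          Real.sin (2 * Real.pi / m) = 0 := by rw [add_mul, h1, h2]; ring
      exact (mul_eq_zero.mp this).resolve_right hsin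
    rw [e1, e2, e3, e4, hz]
    simp

/-- The geometric representation. -/
noncomputable def geom (cs : CoxeterSystem M W) : W →* ((B →₀ ℝ) ≃ₗ[ℝ] (B →₀ ℝ)) :=
  cs.lift ⟨refl M, refl_isLiftable M⟩

lemma geom_simple (cs : CoxeterSystem M W) (i : B) (z : B →₀ ℝ) :
    geom cs (cs.simple i) z = z - coroot M i z • root i := by
  rw [geom, cs.lift_apply_simple, refl_apply]

lemma geom_simple_coord (cs : CoxeterSystem M W) (i j : B) (h : i ≠ j) (z : B →₀ ℝ) :
    geom cs (cs.simple i) z j = z j := by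
  rw [geom_simple]
  simp [root, h]

lemma geom_word_coord (cs : CoxeterSystem M W) (ω : List B) (j : B) (h : j ∉ ω) (z : B →₀ ℝ) :
    geom cs (cs.wordProd ω) z j = z j := by
  induction ω with
  | nil => simp
  | cons i ω ih =>
    simp only [List.mem_cons, not_or] at h
    rw [cs.wordProd_cons, map_mul, LinearEquiv.mul_apply, geom_simple_coord cs i j (Ne.symm h.1),
      ih h.2]

lemma geom_simple_root (cs : CoxeterSystem M W) (i : B) :
    geom cs (cs.simple i) (root i) = - root i := by
  rw [geom_simple, coroot_root_self]; module

/-- If `s i` negates `z` then `z` is supported at `i`. -/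
lemma coord_eq_zero_of_neg (cs : CoxeterSystem M W) (i j : B) (h : i ≠ j) (z : B →₀ ℝ)
    (hz : geom cs (cs.simple i) z = - z) : z j = 0 := by
  have := geom_simple_coord cs i j h z
  rw [hz, Finsupp.neg_apply] at this
  linarith

/-! ### Strong exchange -/

open Classical in
/-- The permutations of `W × ZMod 2` used for the strong exchange property. -/
noncomputable def sg (cs : CoxeterSystem M W) (i : B) : Equiv.Perm (W × ZMod 2) :=
  Function.Involutive.toPerm
    (fun p => (cs.simple i * p.1 * cs.simple i, p.2 + if p.1 = cs.simple i then 1 else 0)) (by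
      rintro ⟨t, e⟩
      have h : cs.simple i * t * cs.simple i = cs.simple i ↔ t = cs.simple i := by
        constructor
        · intro h
          have := congrArg (fun x => cs.simple i * x * cs.simple i) h
          simpa [mul_assoc] using this
        · rintro rfl; simp
      ext
      · simp [mul_assoc]
      · simp only [h, add_assoc]
        split_ifs
        · rw [show (1 : ZMod 2) + 1 = 0 by decide, add_zero]
        · simp)

open Classical in
lemma sg_apply (cs : CoxeterSystem M W) (i : B) (t : W) (e : ZMod 2) :
    sg cs i (t, e) =
      (cs.simple i * t * cs.simple i, e + if t = cs.simple i then 1 else 0) := rfl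

open Classical in
lemma sg_pow (cs : CoxeterSystem M W) (i j : B) (n : ℕ) (t : W) (e : ZMod 2) :
    ((sg cs i * sg cs j) ^ n) (t, e) =
      ((cs.simple i * cs.simple j) ^ n * t * ((cs.simple i * cs.simple j) ^ n)⁻¹,
        e + ∑ k ∈ Finset.range (2 * n),
          if (cs.simple i * cs.simple j) ^ k * t = cs.simple j then 1 else 0) := by
  set a := cs.simple i with ha
  set b := cs.simple j with hb
  have aa : a * a = 1 := cs.simple_mul_simple_self i
  have bb : b * b = 1 := cs.simple_mul_simple_self j
  have ainv : a⁻¹ = a := cs.inv_simple i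
  have binv : b⁻¹ = b := cs.inv_simple j
  have hbr : ∀ k : ℕ, b * (a * b) ^ k = ((a * b) ^ k)⁻¹ * b := by
    intro k
    have : b * (a * b) ^ k * b⁻¹ = ((a * b) ^ k)⁻¹ := by
      rw [← conj_pow, ← inv_pow]
      congr 1
      rw [mul_inv_rev, ainv, binv]
      simp [mul_assoc, bb]
    rw [← this]; group
  induction n with
  | zero => simp
  | succ n ih =>
    rw [pow_succ', Equiv.Perm.mul_apply, ih, Equiv.Perm.mul_apply, sg_apply, sg_apply]
    rw [← ha, ← hb]
    have h1 : (a * b) ^ n * t * ((a * b) ^ n)⁻¹ = b ↔ (a * b) ^ (2 * n) * t = b := by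
      rw [mul_inv_eq_iff_eq_mul, hbr, eq_inv_mul_iff_mul_eq, ← mul_assoc, ← pow_add, two_mul]
    have h2 : b * ((a * b) ^ n * t * ((a * b) ^ n)⁻¹) * b = a ↔
        (a * b) ^ (2 * n + 1) * t = b := by
      have e : ∀ X : W, b * X * b = a ↔ X = b * (a * b) := by
        intro X
        constructor
        · rintro h
          rw [← h]
          simp only [mul_assoc, bb, mul_one]
          rw [← mul_assoc, bb, one_mul]
        · rintro rfl
          simp only [mul_assoc, bb, mul_one]
          rw [← mul_assoc, bb, one_mul]
      rw [e, mul_inv_eq_iff_eq_mul, mul_assoc, ← pow_succ', hbr, eq_inv_mul_iff_mul_eq,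
        ← mul_assoc, ← pow_add, show n + 1 + n = 2 * n + 1 by ring]
    rw [show 2 * (n + 1) = 2 * n + 1 + 1 by ring, Finset.sum_range_succ, Finset.sum_range_succ]
    ext
    · simp only [pow_succ', mul_inv_rev, ainv, binv, mul_assoc]
    · simp only [h1, h2, add_assoc]

lemma sg_isLiftable (cs : CoxeterSystem M W) : M.IsLiftable (sg cs) := by
  classical
  intro i j
  ext1 ⟨t, e⟩
  rw [sg_pow, cs.simple_mul_simple_pow, two_mul, Finset.sum_range_add]
  simp only [pow_add, cs.simple_mul_simple_pow, one_mul, inv_one, mul_one]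
  have : ∀ x : ZMod 2, x + x = 0 := by decide
  rw [this, add_zero]
  rfl

/-- The action of `W` on `W × ZMod 2`. -/
noncomputable def act (cs : CoxeterSystem M W) : W →* Equiv.Perm (W × ZMod 2) :=
  cs.lift ⟨sg cs, sg_isLiftable cs⟩

open Classical in
lemma act_word (cs : CoxeterSystem M W) (ω : List B) (t : W) (e : ZMod 2) :
    act cs (cs.wordProd ω) (t, e) =
      (cs.wordProd ω * t * (cs.wordProd ω)⁻¹, e + ((cs.rightInvSeq ω).count t : ℕ)) := by
  induction ω with
  | nil => simp
  | cons i ω ih =>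
    rw [cs.wordProd_cons, map_mul, Equiv.Perm.mul_apply, ih, act, cs.lift_apply_simple, sg_apply]
    have h : cs.wordProd ω * t * (cs.wordProd ω)⁻¹ = cs.simple i ↔
        (cs.wordProd ω)⁻¹ * cs.simple i * cs.wordProd ω = t := by
      constructor
      · intro h; rw [← h]; group
      · rintro rfl; group
    ext
    · simp [mul_assoc]
    · simp only [CoxeterSystem.rightInvSeq, List.count_cons, h, beq_iff_eq]
      push_cast
      rw [add_assoc]

lemma act_shift (cs : CoxeterSystem M W) (w t : W) (e : ZMod 2) :
    act cs w (t, e) = (w * t * w⁻¹, e + (act cs w (t, 0)).2) := by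
  classical
  obtain ⟨ω, rfl⟩ := cs.wordProd_surjective w
  rw [act_word, act_word]; simp

lemma act_reflection (cs : CoxeterSystem M W) (t : W) (ht : cs.IsReflection t) (e : ZMod 2) :
    act cs t (t, e) = (t, e + 1) := by
  obtain ⟨u, i, rfl⟩ := ht
  obtain ⟨p, hp⟩ : ∃ p, act cs u (cs.simple i, p) = (u * cs.simple i * u⁻¹, e) :=
    ⟨e - (act cs u (cs.simple i, 0)).2, by rw [act_shift]; simp⟩
  have h1 : act cs (cs.simple i) (cs.simple i, p) = (cs.simple i, p + 1) := by
    rw [act, cs.lift_apply_simple, sg_apply]; simp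
  rw [map_mul, map_mul, Equiv.Perm.mul_apply, Equiv.Perm.mul_apply]
  rw [← hp, ← Equiv.Perm.mul_apply (act cs u⁻¹), ← map_mul, inv_mul_cancel, map_one,
    Equiv.Perm.one_apply, h1]
  rw [act_shift] at hp ⊢
  have := congrArg Prod.snd hp
  simp only at this
  rw [← this]
  ext
  · rfl
  · simp only; ring

/-- Strong exchange property. -/
lemma strong_exchange (cs : CoxeterSystem M W) (ω : List B) (t : W) (ht : cs.IsReflection t)
    (hlt : cs.length (cs.wordProd ω * t) < cs.length (cs.wordProd ω)) :
    ∃ k < ω.length, cs.wordProd ω * t = cs.wordProd (ω.eraseIdx k) ∧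
      (cs.rightInvSeq ω).getD k 1 = t := by
  classical
  have hmem : t ∈ cs.rightInvSeq ω := by
    by_contra hn
    have h0 : (cs.rightInvSeq ω).count t = 0 := List.count_eq_zero.mpr hn
    obtain ⟨ω₂, hr, h2⟩ := cs.exists_isReduced (cs.wordProd ω * t)
    have h3 : act cs (cs.wordProd ω * t) (t, 0) = act cs (cs.wordProd ω) (t, 0 + 1) := by
      rw [map_mul, Equiv.Perm.mul_apply, act_reflection cs t ht]
    rw [act_word, h0, h2, act_word] at h3
    have h4 := congrArg Prod.snd h3
    simp only [Nat.cast_zero, zero_add, add_zero] at h4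
    have h5 : t ∈ cs.rightInvSeq ω₂ := by
      by_contra hn2
      rw [List.count_eq_zero.mpr hn2] at h4
      simp at h4
    have h6 := (cs.isRightInversion_of_mem_rightInvSeq hr h5).2
    rw [← h2, mul_assoc, ht.mul_self, mul_one] at h6
    omega
  obtain ⟨k, hk, hkt⟩ := List.mem_iff_getElem.mp hmem
  refine ⟨k, by simpa using hk, ?_, ?_⟩
  · rw [← cs.wordProd_mul_getD_rightInvSeq, List.getD_eq_getElem _ 1 hk, hkt]
  · rw [List.getD_eq_getElem _ 1 hk, hkt]

/-- Exchange property for left descents. -/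
lemma left_exchange (cs : CoxeterSystem M W) (ω : List B) (i : B)
    (hlt : cs.length (cs.simple i * cs.wordProd ω) < cs.length (cs.wordProd ω)) :
    ∃ k < ω.length, cs.simple i * cs.wordProd ω = cs.wordProd (ω.eraseIdx k) := by
  have e : cs.simple i * cs.wordProd ω =
      cs.wordProd ω * ((cs.wordProd ω)⁻¹ * cs.simple i * cs.wordProd ω) := by group
  have ht : cs.IsReflection ((cs.wordProd ω)⁻¹ * cs.simple i * cs.wordProd ω) :=
    ⟨(cs.wordProd ω)⁻¹, i, by simp⟩
  rw [e] at hlt ⊢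
  obtain ⟨k, hk, h, -⟩ := strong_exchange cs ω _ ht hlt
  exact ⟨k, hk, h⟩

/-- Deletion property. -/
lemma exists_reduced_sublist (cs : CoxeterSystem M W) (ω : List B) :
    ∃ ω' : List B, ω'.Sublist ω ∧ cs.IsReduced ω' ∧ cs.wordProd ω' = cs.wordProd ω := by
  induction ω with
  | nil => exact ⟨[], List.Sublist.refl _, by simp [CoxeterSystem.IsReduced], rfl⟩
  | cons i ω ih =>
    obtain ⟨α, hα, hr, hp⟩ := ih
    rcases cs.length_simple_mul (cs.wordProd α) i with h | h
    · refine ⟨i :: α, hα.cons_cons i, ?_, ?_⟩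
      · rw [CoxeterSystem.IsReduced, cs.wordProd_cons, h, hr.eq, List.length_cons]
      · rw [cs.wordProd_cons, cs.wordProd_cons, hp]
    · obtain ⟨k, hk, hke⟩ := left_exchange cs α i (by omega)
      refine ⟨α.eraseIdx k, ((List.eraseIdx_sublist α k).trans hα).cons i, ?_, ?_⟩
      · have := List.length_eraseIdx_add_one hk
        rw [CoxeterSystem.IsReduced, ← hke]
        have := hr.eq
        omega
      · rw [← hke, hp, cs.wordProd_cons]

/-! ### Bruhat order via reflections -/

/-- One step of the Bruhat graph. -/
def Step (cs : CoxeterSystem M W) (v w : W) : Prop :=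
  ∃ t, cs.IsReflection t ∧ v = w * t ∧ cs.length v < cs.length w

/-- Bruhat order as the reflexive transitive closure. -/
def Br (cs : CoxeterSystem M W) : W → W → Prop := Relation.ReflTransGen (Step cs)

lemma step_simple (cs : CoxeterSystem M W) (i : B) (w : W)
    (h : cs.length w < cs.length (cs.simple i * w)) : Step cs w (cs.simple i * w) :=
  ⟨w⁻¹ * cs.simple i * w, ⟨w⁻¹, i, by simp⟩, by simp [mul_assoc], h⟩

lemma Br.exists_sublist {cs : CoxeterSystem M W} {v w : W} (h : Br cs v w) (ω : List B)
    (hω : cs.wordProd ω = w) : ∃ ω' : List B, ω'.Sublist ω ∧ cs.wordProd ω' = v := by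
  induction h using Relation.ReflTransGen.head_induction_on with
  | refl => exact ⟨ω, List.Sublist.refl _, hω⟩
  | head h _ ih =>
    obtain ⟨α, hα, hp⟩ := ih
    obtain ⟨t, ht, rfl, hl⟩ := h
    rw [← hp] at hl
    obtain ⟨k, -, hk, -⟩ := strong_exchange cs α t ht hl
    exact ⟨α.eraseIdx k, (List.eraseIdx_sublist α k).trans hα, by rw [← hk, hp]⟩

lemma Br.bruhatLE {cs : CoxeterSystem M W} {v w : W} (h : Br cs v w) : cs.bruhatLE v w := by
  intro ω _ hω
  obtain ⟨α, hα, hp⟩ := h.exists_sublist ω hω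
  obtain ⟨β, hβ, hr, hq⟩ := exists_reduced_sublist cs α
  exact ⟨β, hβ.trans hα, hr, hq.trans hp⟩

lemma step_mul (cs : CoxeterSystem M W) (i : B) (v w : W) (h : Step cs v w) :
    Step cs (cs.simple i * v) (cs.simple i * w) ∨ cs.simple i * v = w := by
  obtain ⟨t, ht, hv, hl⟩ := h
  by_cases hlt : cs.length (cs.simple i * v) < cs.length (cs.simple i * w)
  · exact Or.inl ⟨t, ht, by rw [hv, mul_assoc], hlt⟩
  right
  have hne : cs.length (cs.simple i * v) ≠ cs.length (cs.simple i * w) := by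
    rw [hv, ← mul_assoc]; exact ht.length_mul_left_ne _
  have h1 := cs.length_simple_mul v i
  have h2 := cs.length_simple_mul w i
  obtain ⟨α, hr, hα⟩ := cs.exists_isReduced (cs.simple i * w)
  have hw : cs.wordProd (i :: α) = w := by
    rw [cs.wordProd_cons, ← hα, cs.simple_mul_simple_cancel_left]
  obtain ⟨k, hk, hke, -⟩ := strong_exchange cs (i :: α) t ht (by rw [hw, ← hv]; exact hl)
  rw [hw, ← hv] at hke
  cases k with
  | zero =>
    rw [List.eraseIdx_cons_zero, ← hα] at hke
    rw [hke, cs.simple_mul_simple_cancel_left]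
  | succ k =>
    exfalso
    rw [List.eraseIdx_cons_succ, cs.wordProd_cons] at hke
    have h3 : cs.simple i * v = cs.wordProd (α.eraseIdx k) := by
      rw [hke, cs.simple_mul_simple_cancel_left]
    have h4 := cs.length_wordProd_le (α.eraseIdx k)
    have hk' : k < α.length := by simpa using hk
    have h5 := List.length_eraseIdx_add_one hk'
    have h6 := hr.eq
    rw [← hα] at h6
    rw [← h3] at h4
    omega

lemma br_mul (cs : CoxeterSystem M W) (i : B) (v w : W) (h : Br cs v w) :
    Br cs (cs.simple i * v) w ∨ Br cs (cs.simple i * v) (cs.simple i * w) := by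
  induction h with
  | refl => exact Or.inr Relation.ReflTransGen.refl
  | tail _ hs ih =>
    rcases ih with ih | ih
    · exact Or.inl (ih.tail hs)
    · rcases step_mul cs i _ _ hs with h | h
      · exact Or.inr (ih.tail h)
      · exact Or.inl (h ▸ ih)

lemma br_of_sublist (cs : CoxeterSystem M W) (ω ω' : List B) (h : ω'.Sublist ω)
    (hr : cs.IsReduced ω) : Br cs (cs.wordProd ω') (cs.wordProd ω) := by
  induction h with
  | slnil => exact Relation.ReflTransGen.refl
  | @cons α β i h ih =>
    have hβ : cs.IsReduced β := by simpa using hr.drop 1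
    have hl : cs.length (cs.wordProd β) < cs.length (cs.simple i * cs.wordProd β) := by
      rw [← cs.wordProd_cons, hr.eq, hβ.eq]; simp
    rw [cs.wordProd_cons]
    exact (ih hβ).tail (step_simple cs i _ hl)
  | @cons_cons α β i h ih =>
    have hβ : cs.IsReduced β := by simpa using hr.drop 1
    have hl : cs.length (cs.wordProd β) < cs.length (cs.simple i * cs.wordProd β) := by
      rw [← cs.wordProd_cons, hr.eq, hβ.eq]; simp
    rw [cs.wordProd_cons, cs.wordProd_cons]
    rcases br_mul cs i _ _ (ih hβ) with h | h
    · exact h.tail (step_simple cs i _ hl)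
    · exact h

/-- Lifting property in the form needed. -/
lemma bruhatLE_simple_mul (cs : CoxeterSystem M W) (i : B) (v x : W)
    (hv : ¬ cs.length (cs.simple i * v) < cs.length v) (h : cs.bruhatLE v x) :
    cs.bruhatLE v (cs.simple i * x) := by
  apply Br.bruhatLE
  rcases cs.length_simple_mul x i with hx | hx
  · obtain ⟨ω, hr, hω⟩ := cs.exists_isReduced x
    obtain ⟨ω', hs, -, hp⟩ := h ω hr hω.symm
    have := br_of_sublist cs ω ω' hs hr
    rw [hp, ← hω] at this
    exact this.tail (step_simple cs i x (by omega))
  · obtain ⟨α, hr, hα⟩ := cs.exists_isReduced (cs.simple i * x)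
    have hw : cs.wordProd (i :: α) = x := by
      rw [cs.wordProd_cons, ← hα, cs.simple_mul_simple_cancel_left]
    have hr' : cs.IsReduced (i :: α) := by
      have := hr.eq
      rw [← hα] at this
      rw [CoxeterSystem.IsReduced, hw, List.length_cons]
      omega
    obtain ⟨ω', hs, hr2, hp⟩ := h _ hr' hw
    rw [hα, ← hp]
    rcases List.sublist_cons_iff.mp hs with hs | ⟨β, rfl, hs⟩
    · exact br_of_sublist cs α ω' hs hr
    · exfalso
      apply hv
      rw [← hp, hr2.eq, cs.wordProd_cons, cs.simple_mul_simple_cancel_left, List.length_cons]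
      have := cs.length_wordProd_le β
      omega

/-! ### The chain element -/

lemma chain_not_descent (cs : CoxeterSystem M W) (ω : List B) (hnd : ω.Nodup)
    (hc : ω.IsChain (fun a b => cs.simple b * cs.simple a ≠ cs.simple a * cs.simple b))
    (i : B) (hi : ω.head? ≠ some i) :
    ¬ cs.length (cs.simple i * cs.wordProd ω) < cs.length (cs.wordProd ω) := by
  intro hlt
  obtain ⟨k, hk, hke⟩ := left_exchange cs ω i hlt
  -- split the word
  obtain ⟨p, c, q, rfl, rfl⟩ : ∃ p c q, ω = p ++ c :: q ∧ p.length = k :=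
    ⟨ω.take k, ω[k], ω.drop (k + 1), by simp, by simp; omega⟩
  have her : (p ++ c :: q).eraseIdx p.length = p ++ q := by
    rw [List.eraseIdx_append_of_length_le (le_refl _)]; simp
  rw [her, cs.wordProd_append, cs.wordProd_append, cs.wordProd_cons] at hke
  have hcp : c ∉ p := by
    intro h
    exact (List.nodup_append.mp hnd).2.2 c h c (by simp) rfl
  have hconj : cs.simple i * cs.wordProd p = cs.wordProd p * cs.simple c := by
    have h : cs.simple i * cs.wordProd p * cs.simple c = cs.wordProd p := by
      apply mul_right_cancel (b := cs.wordProd q)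
      rw [← hke]; simp only [mul_assoc]
    nth_rewrite 2 [← h]
    rw [cs.simple_mul_simple_cancel_right]
  set z := geom cs (cs.wordProd p) (root c) with hz
  have hneg : geom cs (cs.simple i) z = - z := by
    rw [hz, ← LinearEquiv.mul_apply, ← map_mul, hconj, map_mul, LinearEquiv.mul_apply,
      geom_simple_root, map_neg]
  have hzc : z c = 1 := by
    rw [hz, geom_word_coord cs p c hcp]; simp [root]
  have hic : i = c := by
    by_contra h
    have := coord_eq_zero_of_neg cs i c h z hneg
    rw [hzc] at this; norm_num at this
  subst hic
  rcases List.eq_nil_or_concat p with rfl | ⟨p', d, rfl⟩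
  · simp at hi
  · rw [List.concat_eq_append] at *
    have hd : cs.simple i * cs.simple d ≠ cs.simple d * cs.simple i := by
      rw [List.append_assoc] at hc
      have := (List.isChain_append.mp hc).2.1
      simp only [List.singleton_append] at this
      exact (List.isChain_cons_cons.mp this).1
    have hdi : i ≠ d := fun h => hd (by rw [h])
    have hdp : d ∉ p' := by
      intro h
      have := (List.nodup_append.mp hnd).1
      exact (List.nodup_append.mp this).2.2 d h d (by simp) rfl
    have h0 := coord_eq_zero_of_neg cs i d hdi z hneg
    rw [hz, cs.wordProd_append, map_mul, LinearEquiv.mul_apply, geom_word_coord cs p' d hdp,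
      cs.wordProd_singleton, geom_simple, coroot_root] at h0
    simp [root, hdi] at h0
    have hM : M d i ≠ 2 := by
      intro h2
      have := cs.simple_mul_simple_pow d i
      rw [h2, pow_two] at this
      apply hd
      have h3 := mul_eq_one_iff_eq_inv.mp this
      rw [mul_inv_rev, cs.inv_simple, cs.inv_simple] at h3
      exact h3.symm
    have hM1 := M.off_diagonal d i (Ne.symm hdi)
    have hpos : 0 < Real.cos (Real.pi / (M d i : ℝ)) := by
      generalize M d i = m at *
      by_cases hm0 : m = 0
      · simp [hm0]
      have hm : (3 : ℝ) ≤ m := by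
        have : 3 ≤ m := by omega
        exact_mod_cast this
      apply Real.cos_pos_of_mem_Ioo
      constructor
      · have : 0 < Real.pi / m := by positivity
        linarith [Real.pi_pos]
      · apply div_lt_div_of_pos_left Real.pi_pos <;> linarith
    linarith

lemma last_mem (cs : CoxeterSystem M W) (p ω : List B) (c : B) (hc : c ∉ p)
    (h : cs.wordProd ω = cs.wordProd (p ++ [c])) : c ∈ ω := by
  by_contra hn
  have h1 := geom_word_coord cs ω c hn (root c)
  rw [h, cs.wordProd_append, map_mul, LinearEquiv.mul_apply, geom_word_coord cs p c hc,
    cs.wordProd_singleton, geom_simple_root] at h1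
  simp [root] at h1
  norm_num at h1

end ChainBruhat

/-- Let `t 0, …, t r` be pairwise distinct simple reflections such that
consecutive ones do not commute, let `P` be a set of simple reflections with
`t 0 ∉ P`, and let `W_P` be the standard parabolic subgroup generated by `P`. If
`x ∈ W` satisfies `t 0 * ⋯ * t r ≤ x` in the Bruhat order, then for every `u ∈ W_P`
one has `t 0 * ⋯ * t r ≤ u * x` in the Bruhat order; in particular `t r` belongs to
the support of `u * x`. -/
theorem chain_le_parabolic_mul_and_mem_support
    {B : Type*} {W : Type*} [Group W] {M : CoxeterMatrix B} (cs : CoxeterSystem M W)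
    (r : ℕ) (t : Fin (r + 1) → B)
    (hdist : Function.Injective fun i => cs.simple (t i))
    (hnc : ∀ i : Fin r,
      cs.simple (t i.succ) * cs.simple (t i.castSucc) ≠
        cs.simple (t i.castSucc) * cs.simple (t i.succ))
    (P : Set B) (hP : t 0 ∉ P)
    (x : W) (hle : cs.bruhatLE (cs.wordProd (List.ofFn t)) x) :
    ∀ u ∈ Subgroup.closure (cs.simple '' P),
      cs.bruhatLE (cs.wordProd (List.ofFn t)) (u * x) ∧
        t (Fin.last r) ∈ cs.support (u * x) := by
  have htinj : Function.Injective t := fun a b h => hdist (by simp only [h])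
  have hnd : (List.ofFn t).Nodup := List.nodup_ofFn.mpr htinj
  have hc : (List.ofFn t).IsChain
      (fun a b => cs.simple b * cs.simple a ≠ cs.simple a * cs.simple b) := by
    rw [List.isChain_iff_getElem]
    intro k hk
    simp only [List.length_ofFn] at hk
    rw [List.getElem_ofFn, List.getElem_ofFn]
    exact hnc ⟨k, by omega⟩
  have hhead : (List.ofFn t).head? = some (t 0) := by simp [List.ofFn_succ]
  have main : ∀ u ∈ Subgroup.closure (cs.simple '' P), ∀ x,
      cs.bruhatLE (cs.wordProd (List.ofFn t)) x →
      cs.bruhatLE (cs.wordProd (List.ofFn t)) (u * x) := by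
    have step : ∀ i ∈ P, ∀ x, cs.bruhatLE (cs.wordProd (List.ofFn t)) x →
        cs.bruhatLE (cs.wordProd (List.ofFn t)) (cs.simple i * x) := by
      intro i hi x hx
      apply ChainBruhat.bruhatLE_simple_mul cs i _ x _ hx
      apply ChainBruhat.chain_not_descent cs _ hnd hc
      rw [hhead]
      intro h
      exact hP (Option.some.inj h ▸ hi)
    intro u hu
    induction hu using Subgroup.closure_induction_left with
    | one => intro x hx; simpa using hx
    | mul_left a ha y _ ih =>
      obtain ⟨i, hi, rfl⟩ := ha
      intro x hx
      rw [mul_assoc]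
      exact step i hi _ (ih x hx)
    | inv_mul_cancel a ha y _ ih =>
      obtain ⟨i, hi, rfl⟩ := ha
      intro x hx
      rw [cs.inv_simple, mul_assoc]
      exact step i hi _ (ih x hx)
  intro u hu
  refine ⟨main u hu x hle, ?_⟩
  intro ω hr hω
  obtain ⟨ω', hs, -, hp⟩ := main u hu x hle ω hr hω
  apply hs.subset
  rw [List.ofFn_succ'] at hp
  apply ChainBruhat.last_mem cs (List.ofFn fun i : Fin r => t i.castSucc) ω'
  · rw [List.mem_ofFn]
    rintro ⟨j, hj⟩
    exact (Fin.castSucc_lt_last j).ne (htinj hj)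
  · rw [hp, List.concat_eq_append]
end

section
/- Let p be a prime, let k be an algebraically closed field of characteristic p, and let σ: k^n → k^n be the coordinatewise Frobenius (a_1, …, a_n) ↦ (a_1^p, …, a_n^p). Let a = (a_1, …, a_n) ∈ k^n. Then the n vectors σ(a), σ^2(a), …, σ^n(a) are linearly independent over k if and only if the coordinates a_1, …, a_n are linearly independent over the prime field 𝔽_p (equivalently, if and only if the line k·a is not contained in any hyperplane of k^n defined over 𝔽_p). -/
theorem sum_pow_aux (p : ℕ) [Fact p.Prime] (k : Type*) [Field k] [CharP k p]
    [Algebra (ZMod p) k] (n : ℕ) (a : Fin n → k) (φ : Fin n → ZMod p) (m : ℕ) :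
    (∑ j, φ j • a j) ^ p ^ m = ∑ j, algebraMap (ZMod p) k (φ j) * a j ^ p ^ m := by
  rw [sum_pow_char_pow]
  refine Finset.sum_congr rfl fun j _ => ?_
  rw [Algebra.smul_def, mul_pow, ← map_pow, ZMod.pow_card_pow]

theorem moore_aux (p : ℕ) [Fact p.Prime] (k : Type*) [Field k] [IsAlgClosed k] [CharP k p]
    [Algebra (ZMod p) k] (n : ℕ) (a : Fin n → k) :
    LinearIndependent k
        (fun i : Fin n => (fun j : Fin n => a j ^ p ^ ((i : ℕ) + 1) : Fin n → k)) ↔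
      LinearIndependent (ZMod p) a := by
  have hp : p.Prime := Fact.out
  constructor
  · intro h
    rw [Fintype.linearIndependent_iff]
    intro φ hφ
    have hu : IsUnit (Matrix.of fun i j : Fin n => a j ^ p ^ ((i : ℕ) + 1)) :=
      Matrix.linearIndependent_rows_iff_isUnit.mp h
    have hinj := Matrix.mulVec_injective_iff_isUnit.mpr hu
    have h0 : (fun j => algebraMap (ZMod p) k (φ j)) = 0 := by
      apply hinj
      rw [Matrix.mulVec_zero]
      funext i
      have := sum_pow_aux p k n a φ ((i : ℕ) + 1)
      rw [hφ, zero_pow (pow_ne_zero _ hp.ne_zero)] at this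
      simp only [Matrix.mulVec, dotProduct, Matrix.of_apply, Pi.zero_apply]
      rw [this]
      exact Finset.sum_congr rfl fun j _ => mul_comm _ _
    intro j
    have := congrFun h0 j
    simpa using this
  · intro h
    rw [Fintype.linearIndependent_iff]
    intro c hc
    have hroot : ∀ i, ∃ e : k, e ^ p = c i := fun i =>
      IsAlgClosed.exists_pow_nat_eq (c i) hp.pos
    choose e he using hroot
    have hz : ∀ j, ∑ i : Fin n, e i * a j ^ p ^ (i : ℕ) = 0 := by
      intro j
      have h1 := congrFun hc j
      simp only [Finset.sum_apply, Pi.smul_apply, smul_eq_mul, Pi.zero_apply] at h1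
      refine eq_zero_of_pow_eq_zero (n := p) ?_
      rw [sum_pow_char, ← h1]
      refine Finset.sum_congr rfl fun i _ => ?_
      rw [mul_pow, he, ← pow_mul, ← pow_succ]
    let Q : Polynomial k := ∑ i : Fin n, Polynomial.C (e i) * Polynomial.X ^ p ^ (i : ℕ)
    have hQ : Q = 0 := by
      have hinj : Function.Injective (fun φ : Fin n → ZMod p => ∑ j, φ j • a j) :=
        by
          intro φ ψ hφψ
          have h2 := Fintype.linearIndependent_iff.mp h (φ - ψ) (by
            simpa [sub_smul, sub_eq_zero] using hφψ)
          funext j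
          exact sub_eq_zero.mp (h2 j)
      refine Polynomial.eq_zero_of_natDegree_lt_card_of_eval_eq_zero Q hinj ?_ ?_
      · intro φ
        simp only [Q, Polynomial.eval_finsetSum, Polynomial.eval_mul, Polynomial.eval_C,
          Polynomial.eval_pow, Polynomial.eval_X, sum_pow_aux, Finset.mul_sum]
        rw [Finset.sum_comm]
        refine Finset.sum_eq_zero fun j _ => ?_
        rw [← mul_zero (algebraMap (ZMod p) k (φ j)), ← hz j, Finset.mul_sum]
        exact Finset.sum_congr rfl fun i _ => by ring
      · rw [Fintype.card_fun, ZMod.card, Fintype.card_fin]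
        rcases Nat.eq_zero_or_pos n with rfl | hn
        · simp [Q]
        · refine lt_of_le_of_lt (b := p ^ (n - 1)) ?_
            (Nat.pow_lt_pow_right hp.one_lt (by omega))
          refine Polynomial.natDegree_sum_le_of_forall_le _ _ fun i _ => ?_
          refine (Polynomial.natDegree_C_mul_X_pow_le _ _).trans ?_
          exact Nat.pow_le_pow_right hp.pos (by omega)
    intro i
    have hco : Q.coeff (p ^ (i : ℕ)) = e i := by
      simp only [Q, Polynomial.finsetSum_coeff, Polynomial.coeff_C_mul_X_pow]
      rw [Finset.sum_eq_single i]
      · simp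
      · intro b _ hb
        rw [if_neg]
        intro hpe
        exact hb (Fin.ext (Nat.pow_right_injective hp.two_le hpe).symm)
      · simp
    rw [← he i, ← hco, hQ, Polynomial.coeff_zero, zero_pow hp.ne_zero]

/-- Let `p` be a prime, `k` an algebraically closed field of
characteristic `p`, and `σ` the coordinatewise Frobenius on `k^n`. For `a ∈ k^n`, the
vectors `σ a, σ² a, …, σⁿ a` are linearly independent over `k` if and only if the
coordinates `a 1, …, a n` are linearly independent over the prime field `𝔽_p`;
equivalently, if and only if the line `k · a` is not contained in any hyperplane of
`k^n` defined over `𝔽_p` (the zero set of a nonzero linear form with coefficients in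
`𝔽_p`). -/
theorem frobenius_iterates_linearIndependent_iff
    (p : ℕ) [Fact p.Prime] (k : Type*) [Field k] [IsAlgClosed k] [CharP k p]
    [Algebra (ZMod p) k]
    (n : ℕ) (a : Fin n → k) :
    (LinearIndependent k
        (fun i : Fin n => (fun j : Fin n => a j ^ p ^ ((i : ℕ) + 1) : Fin n → k)) ↔
      LinearIndependent (ZMod p) a) ∧
    (LinearIndependent k
        (fun i : Fin n => (fun j : Fin n => a j ^ p ^ ((i : ℕ) + 1) : Fin n → k)) ↔
      ¬ ∃ φ : Fin n → ZMod p, φ ≠ 0 ∧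
        ∀ c : k, ∑ j : Fin n, algebraMap (ZMod p) k (φ j) * (c * a j) = 0) := by
  refine ⟨moore_aux p k n a, (moore_aux p k n a).trans ?_⟩
  rw [Fintype.linearIndependent_iff]
  constructor
  · rintro h ⟨φ, hne, hφ⟩
    apply hne
    funext j
    refine h φ ?_ j
    simpa [Algebra.smul_def] using hφ 1
  · intro h φ hφ
    by_contra hcon
    refine h ⟨φ, fun h0 => hcon fun i => by simp [h0], fun c => ?_⟩
    rw [← mul_zero c, ← hφ, Finset.mul_sum]
    refine Finset.sum_congr rfl fun j _ => ?_
    rw [Algebra.smul_def]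
    ring
end

section
/- Let p be a prime, let k be an algebraically closed field of characteristic p, and let σ: k^n → k^n be the coordinatewise Frobenius (a_1, …, a_n) ↦ (a_1^p, …, a_n^p). Let a = (a_1, …, a_n) ∈ k^n be a vector whose coordinates a_1, …, a_n are linearly independent over 𝔽_p, and for 1 ≤ i ≤ n set F_i = span_k(σ(a), σ^2(a), …, σ^i(a)). Then for all 1 ≤ i ≤ n and 1 ≤ j ≤ n, the intersection of F_i with the coordinate subspace span_k(e_1, …, e_j) has dimension max(0, i + j − n), where e_1, …, e_n is the standard basis of k^n. -/
open Polynomial in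
lemma moore_aux_s7 (p : ℕ) [Fact p.Prime] (k : Type*) [Field k] [CharP k p]
    [Algebra (ZMod p) k] {ι : Type*} [Fintype ι] (b : ι → k) (hb : LinearIndependent (ZMod p) b)
    (i : ℕ) (hi : i ≤ Fintype.card ι) (c : Fin i → k)
    (h : ∀ l, ∑ m : Fin i, c m * b l ^ p ^ ((m : ℕ) + 1) = 0) : c = 0 := by
  classical
  have hp : p.Prime := Fact.out
  have : ExpChar k p := ExpChar.prime hp
  funext m0
  have hi0 : 0 < i := m0.pos
  set P : k[X] := ∑ m : Fin i, Polynomial.monomial (p ^ (m : ℕ)) (c m) with hP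
  have hinj : Function.Injective (fun x : ι → ZMod p => (∑ l, x l • b l) ^ p) := by
    intro x y hxy
    have h1 : (∑ l, x l • b l) = ∑ l, y l • b l := frobenius_inj k p hxy
    exact hb.fintypeLinearCombination_injective (by
      simpa [Fintype.linearCombination_apply] using h1)
  have hP0 : P = 0 := by
    refine Polynomial.eq_zero_of_natDegree_lt_card_of_eval_eq_zero P hinj ?_ ?_
    · intro x
      rw [hP, Polynomial.eval_finsetSum]
      have key : ∀ m : Fin i, ((monomial (p ^ (m : ℕ))) (c m)).eval ((∑ l, x l • b l) ^ p)
          = ∑ l, x l • (c m * b l ^ p ^ ((m : ℕ) + 1)) := by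
        intro m
        rw [Polynomial.eval_monomial, ← pow_mul, ← pow_succ', sum_pow_char_pow, Finset.mul_sum]
        refine Finset.sum_congr rfl fun l _ => ?_
        rw [_root_.smul_pow, ZMod.pow_card_pow, mul_smul_comm]
      rw [Finset.sum_congr rfl fun m _ => key m, Finset.sum_comm]
      refine Finset.sum_eq_zero fun l _ => ?_
      rw [← Finset.smul_sum, h l, smul_zero]
    · have : P.natDegree ≤ p ^ (i - 1) := by
        refine Polynomial.natDegree_sum_le_of_forall_le _ _ fun m _ => ?_
        refine (Polynomial.natDegree_monomial_le _).trans ?_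
        exact Nat.pow_le_pow_right hp.pos (by omega)
      refine this.trans_lt ?_
      rw [Fintype.card_fun, ZMod.card]
      exact Nat.pow_lt_pow_right hp.one_lt (by omega)
  have := congrArg (fun Q => Q.coeff (p ^ (m0 : ℕ))) hP0
  simp only [hP, Polynomial.finsetSum_coeff, Polynomial.coeff_monomial, Polynomial.coeff_zero] at this
  rw [Finset.sum_eq_single m0] at this
  · simpa using this
  · intro m _ hm
    rw [if_neg]
    intro h'
    exact hm (Fin.ext (Nat.pow_right_injective hp.two_le h'))
  · simp

/-- Let `p` be a prime, `k` an algebraically closed field of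
characteristic `p`, and `σ` the coordinatewise Frobenius on `k^n`. Let `a ∈ k^n` have
coordinates linearly independent over `𝔽_p`, and for `1 ≤ i ≤ n` let
`F i = span_k (σ a, σ² a, …, σ^i a)`. Then for all `1 ≤ i ≤ n` and `1 ≤ j ≤ n`, the
intersection of `F i` with the coordinate subspace `span_k (e 1, …, e j)` has
dimension `max 0 (i + j - n)`. -/
theorem dim_inter_frobenius_span_coordinate_subspace
    (p : ℕ) [Fact p.Prime] (k : Type*) [Field k] [IsAlgClosed k] [CharP k p]
    [Algebra (ZMod p) k]
    (n : ℕ) (a : Fin n → k) (ha : LinearIndependent (ZMod p) a)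
    (i j : ℕ) (hi1 : 1 ≤ i) (hin : i ≤ n) (hj1 : 1 ≤ j) (hjn : j ≤ n) :
    (Module.finrank k
        ↥(Submodule.span k
            (Set.range fun m : Fin i => (fun l : Fin n => a l ^ p ^ ((m : ℕ) + 1) : Fin n → k)) ⊓
          Submodule.span k
            (Set.range fun l : Fin j => Pi.single (Fin.castLE hjn l) (1 : k))) : ℤ) =
      max 0 ((i : ℤ) + (j : ℤ) - (n : ℤ)) := by
  classical
  set v : Fin i → Fin n → k := fun m l => a l ^ p ^ ((m : ℕ) + 1) with hv
  let T : (Fin i → k) →ₗ[k] (Fin n → k) := Fintype.linearCombination k v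
  have hT : ∀ c l, T c l = ∑ m : Fin i, c m * a l ^ p ^ ((m : ℕ) + 1) := by
    intro c l
    simp [T, hv, Fintype.linearCombination_apply, Finset.sum_apply]
  have hTinj : Function.Injective T := by
    rw [← LinearMap.ker_eq_bot, LinearMap.ker_eq_bot']
    intro c hc
    refine moore_aux_s7 p k a ha i (by simpa using hin) c fun l => ?_
    rw [← hT, hc]; rfl
  let g : Fin (n - j) → Fin n := fun t => ⟨j + t, by omega⟩
  have hg : Function.Injective g := by
    intro s t hst
    have := congrArg Fin.val hst
    simp only [g] at this
    exact Fin.ext (by omega)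
  let R : (Fin n → k) →ₗ[k] (Fin (n - j) → k) := LinearMap.funLeft k k g
  have hR : Submodule.span k (Set.range fun l : Fin j => Pi.single (Fin.castLE hjn l) (1 : k))
      = LinearMap.ker R := by
    apply le_antisymm
    · rw [Submodule.span_le]
      rintro _ ⟨l, rfl⟩
      show R _ = 0
      funext t
      show (Pi.single (Fin.castLE hjn l) (1 : k) : Fin n → k) (g t) = 0
      refine Pi.single_eq_of_ne ?_ _
      intro h
      have := congrArg Fin.val h
      simp [g] at this
      omega
    · intro x hx
      have hx0 : ∀ l : Fin n, j ≤ l → x l = 0 := by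
        intro l hl
        have := congrFun (show R x = 0 from hx) ⟨l - j, by omega⟩
        have e : g ⟨l - j, by omega⟩ = l := Fin.ext (by simp [g]; omega)
        simpa [R, LinearMap.funLeft_apply, e] using this
      rw [← Finset.univ_sum_single x]
      refine Submodule.sum_mem _ fun l _ => ?_
      by_cases hl : (l : ℕ) < j
      · have : (Pi.single l (x l) : Fin n → k) = x l • Pi.single l (1 : k) := by
          rw [← Pi.single_smul]; simp
        rw [this]
        exact Submodule.smul_mem _ _ (Submodule.subset_span ⟨⟨l, hl⟩, rfl⟩)
      · rw [hx0 l (by omega)]; simp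
  have hTr : Submodule.span k (Set.range v) = LinearMap.range T :=
    (Fintype.range_linearCombination k v).symm
  have hmap : LinearMap.range T ⊓ LinearMap.ker R = (LinearMap.ker (R ∘ₗ T)).map T := by
    rw [LinearMap.ker_comp, Submodule.map_comap_eq]
  rw [hR, hTr, hmap, ← (Submodule.equivMapOfInjective T hTinj (LinearMap.ker (R ∘ₗ T))).finrank_eq]
  have hag : LinearIndependent (ZMod p) (fun t => a (g t)) := ha.comp g hg
  rcases le_total i (n - j) with hij | hij
  · have hk : LinearMap.ker (R ∘ₗ T) = ⊥ := by
      rw [LinearMap.ker_eq_bot']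
      intro c hc
      refine moore_aux_s7 p k _ hag i (by simpa using hij) c fun t => ?_
      rw [← hT]
      exact congrFun hc t
    rw [hk, finrank_bot]
    omega
  · let w : Fin (n - j) → Fin (n - j) → k := fun m t => a (g t) ^ p ^ ((m : ℕ) + 1)
    let S : (Fin (n - j) → k) →ₗ[k] (Fin (n - j) → k) := Fintype.linearCombination k w
    have hSinj : Function.Injective S := by
      rw [← LinearMap.ker_eq_bot, LinearMap.ker_eq_bot']
      intro c hc
      refine moore_aux_s7 p k _ hag (n - j) (by simp) c fun t => ?_
      have := congrFun hc t
      simpa [S, w, Fintype.linearCombination_apply, Finset.sum_apply] using this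
    have hSr : LinearMap.range S = ⊤ :=
      LinearMap.range_eq_top.2 (LinearMap.injective_iff_surjective.1 hSinj)
    have hle : LinearMap.range S ≤ LinearMap.range (R ∘ₗ T) := by
      rw [show LinearMap.range S = _ from Fintype.range_linearCombination k w, Submodule.span_le]
      rintro _ ⟨m, rfl⟩
      refine ⟨Pi.single (Fin.castLE hij m) 1, ?_⟩
      funext t
      show T _ (g t) = _
      rw [hT, Finset.sum_eq_single (Fin.castLE hij m)]
      · simp [w]
      · intro b _ hb
        rw [Pi.single_eq_of_ne hb, zero_mul]
      · simp
    have htop : LinearMap.range (R ∘ₗ T) = ⊤ := top_le_iff.1 (hSr ▸ hle)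
    have := LinearMap.finrank_range_add_finrank_ker (R ∘ₗ T)
    rw [htop, finrank_top, Module.finrank_fin_fun, Module.finrank_fin_fun] at this
    omega
end
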